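/- Let Γ be a lattice in G = PSL(2,ℂ). Then for every x ∈ Γ\G, the closure of the orbit xH is either equal to xH (i.e. xH is closed) or equal to all of Γ\G. -/

import Mathlib

open scoped MatrixGroups
open Matrix Filter

noncomputable section

/-- `SL(2,ℂ)`. -/
abbrev SL2C := Matrix.SpecialLinearGroup (Fin 2) ℂ

instance : TopologicalSpace SL2C := instTopologicalSpaceSubtype

/-- `G = PSL(2,ℂ) = SL(2,ℂ)/{±I}`, with the quotient topology. -/
abbrev PSL2C := Matrix.ProjectiveSpecialLinearGroup (Fin 2) ℂ

/-- The projection `π : SL(2,ℂ) → PSL(2,ℂ)`. -/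
def pr : SL2C →* PSL2C := QuotientGroup.mk' _

/-- The upper triangular unipotent matrix `[[1, t],[0, 1]]` as an element of `SL(2,ℂ)`. -/
def uMat (t : ℂ) : SL2C := ⟨!![1, t; 0, 1], by simp [Matrix.det_fin_two_of]⟩

/-- `u_t = π [[1, t],[0, 1]]` for `t ∈ ℝ`. -/
def uu (t : ℝ) : PSL2C := pr (uMat t)

/-- `v_s = π [[1, is],[0, 1]]` for `s ∈ ℝ`. -/
def vv (s : ℝ) : PSL2C := pr (uMat (s * Complex.I))

/-- The subgroup `U = {u_t : t ∈ ℝ}` as a subset of `PSL(2,ℂ)`. -/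
def Uset : Set PSL2C := Set.range uu

/-- The subgroup `V = {v_s : s ∈ ℝ}` as a subset of `PSL(2,ℂ)`. -/
def Vset : Set PSL2C := Set.range vv

/-- The subgroup `N = {π [[1, z],[0,1]] : z ∈ ℂ}` as a subset of `PSL(2,ℂ)`. -/
def Nset : Set PSL2C := {x | ∃ z : ℂ, x = pr (uMat z)}

/-- `H = π (SL(2,ℝ))`, the image in `PSL(2,ℂ)` of the real matrices. -/
def Hset : Set PSL2C :=
  {x | ∃ g : Matrix.SpecialLinearGroup (Fin 2) ℝ,
    x = pr (Matrix.SpecialLinearGroup.map (algebraMap ℝ ℂ) g)}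

/-- The upper triangular matrix `[[a, z],[0, a⁻¹]]` as an element of `SL(2,ℂ)`,
for a nonzero real `a`. -/
def tri (a : ℝ) (ha : a ≠ 0) (z : ℂ) : SL2C :=
  ⟨!![(a : ℂ), z; 0, (a : ℂ)⁻¹], by
    have h : (a : ℂ) ≠ 0 := by exact_mod_cast ha
    simp [Matrix.det_fin_two_of, mul_inv_cancel₀ h]⟩

/-- `AN = {π [[a, z],[0, a⁻¹]] : a > 0 real, z ∈ ℂ}`. -/
def ANset : Set PSL2C := {x | ∃ (a : ℝ) (ha : 0 < a) (z : ℂ), x = pr (tri a ha.ne' z)}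

/-- `AV = {π [[a, ib],[0, a⁻¹]] : a > 0 real, b ∈ ℝ}`. -/
def AVset : Set PSL2C :=
  {x | ∃ (a : ℝ) (ha : 0 < a) (b : ℝ), x = pr (tri a ha.ne' (b * Complex.I))}

/-- `A = {π diag(a, a⁻¹) : a > 0 real}`. -/
def Aset : Set PSL2C := {x | ∃ (a : ℝ) (ha : 0 < a), x = pr (tri a ha.ne' 0)}

variable (Γ : Subgroup PSL2C)

/-- The space `Γ\\G` of right cosets `Γg`, with the quotient topology. -/
abbrev XΓ := Quotient (QuotientGroup.rightRel Γ)

/-- The natural projection `G → Γ\\G`. -/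
def mkX (g : PSL2C) : XΓ Γ := Quotient.mk'' g

/-- The right translation action of `G` on `Γ\\G`: `(Γg₀)·g = Γ(g₀g)`. -/
def act (x : XΓ Γ) (g : PSL2C) : XΓ Γ :=
  Quotient.map' (fun h => h * g)
    (fun a b hab => by
      rw [QuotientGroup.rightRel_apply] at hab ⊢
      simpa [_root_.mul_inv_rev, mul_assoc] using hab) x

/-- The orbit `xS = {x·s : s ∈ S}` of a point `x ∈ Γ\\G` under a subset `S ⊆ G`. -/
def orb (x : XΓ Γ) (S : Set PSL2C) : Set (XΓ Γ) := (fun s => act Γ x s) '' S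

/-- `Γ` is a lattice in `G`: there is a nonzero finite Borel measure on `Γ\\G`
invariant under the right translation action of `G`. -/
def IsLattice : Prop :=
  letI : MeasurableSpace (XΓ Γ) := borel _
  ∃ μ : MeasureTheory.Measure (XΓ Γ), μ ≠ 0 ∧ MeasureTheory.IsFiniteMeasure μ ∧
    ∀ g : PSL2C, MeasureTheory.Measure.map (fun x => act Γ x g) μ = μ


set_option linter.unusedSectionVars false
set_option linter.style.haveILetI false
/-! ### Basic facts on `SL(2,ℂ)` -/

instance instTG_SL2C : IsTopologicalGroup SL2C := Matrix.SpecialLinearGroup.topologicalGroup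

lemma SL_isClosedEmbedding : Topology.IsClosedEmbedding (Subtype.val : SL2C → Matrix (Fin 2) (Fin 2) ℂ) :=
  Matrix.SpecialLinearGroup.isClosedEmbedding_val

instance instT2_SL2C : T2Space SL2C := SL_isClosedEmbedding.isEmbedding.t2Space

instance instSC_SL2C : SecondCountableTopology SL2C :=
  haveI : SecondCountableTopology (Matrix (Fin 2) (Fin 2) ℂ) :=
    inferInstanceAs (SecondCountableTopology (Fin 2 → Fin 2 → ℂ))
  SL_isClosedEmbedding.isEmbedding.secondCountableTopology

instance instLC_SL2C : LocallyCompactSpace SL2C :=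
  haveI : LocallyCompactSpace (Matrix (Fin 2) (Fin 2) ℂ) :=
    inferInstanceAs (LocallyCompactSpace (Fin 2 → Fin 2 → ℂ))
  SL_isClosedEmbedding.locallyCompactSpace

lemma tendsto_SL {ι : Type*} {l : Filter ι} {f : ι → SL2C} {g : SL2C} :
    Tendsto f l (nhds g) ↔ Tendsto (fun i => f i 0 0) l (nhds (g 0 0)) ∧
      Tendsto (fun i => f i 0 1) l (nhds (g 0 1)) ∧ Tendsto (fun i => f i 1 0) l (nhds (g 1 0)) ∧
      Tendsto (fun i => f i 1 1) l (nhds (g 1 1)) := by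
  refine (SL_isClosedEmbedding.isEmbedding.tendsto_nhds_iff (f := f)).trans ?_
  refine Iff.trans (tendsto_pi_nhds (f := fun i => ((f i).1 : Fin 2 → Fin 2 → ℂ))) ?_
  simp only [tendsto_pi_nhds, Fin.forall_fin_two]
  exact and_assoc

lemma continuous_SL {Z : Type*} [TopologicalSpace Z] {f : Z → SL2C}
    (h00 : Continuous fun z => f z 0 0) (h01 : Continuous fun z => f z 0 1)
    (h10 : Continuous fun z => f z 1 0) (h11 : Continuous fun z => f z 1 1) : Continuous f := by
  rw [continuous_iff_continuousAt]
  intro z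
  exact tendsto_SL.2 ⟨h00.continuousAt, h01.continuousAt, h10.continuousAt, h11.continuousAt⟩

lemma continuous_entry (i j : Fin 2) : Continuous fun g : SL2C => g i j :=
  (continuous_apply_apply (ρ := fun _ _ => ℂ) i j).comp continuous_subtype_val

lemma SL_ext {g h : SL2C} (h00 : g 0 0 = h 0 0) (h01 : g 0 1 = h 0 1)
    (h10 : g 1 0 = h 1 0) (h11 : g 1 1 = h 1 1) : g = h := by
  apply Subtype.ext
  ext i j
  fin_cases i <;> fin_cases j <;> assumption

lemma SL_det (g : SL2C) : g 0 0 * g 1 1 - g 0 1 * g 1 0 = 1 := by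
  have := g.2
  rwa [Matrix.det_fin_two] at this

lemma mul00 (g h : SL2C) : (g * h) 0 0 = g 0 0 * h 0 0 + g 0 1 * h 1 0 := by
  simp [Matrix.mul_apply, Fin.sum_univ_two]
lemma mul01 (g h : SL2C) : (g * h) 0 1 = g 0 0 * h 0 1 + g 0 1 * h 1 1 := by
  simp [Matrix.mul_apply, Fin.sum_univ_two]
lemma mul10 (g h : SL2C) : (g * h) 1 0 = g 1 0 * h 0 0 + g 1 1 * h 1 0 := by
  simp [Matrix.mul_apply, Fin.sum_univ_two]
lemma mul11 (g h : SL2C) : (g * h) 1 1 = g 1 0 * h 0 1 + g 1 1 * h 1 1 := by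
  simp [Matrix.mul_apply, Fin.sum_univ_two]
lemma inv00 (g : SL2C) : (g⁻¹) 0 0 = g 1 1 := by
  simp [Matrix.SpecialLinearGroup.coe_inv, Matrix.adjugate_fin_two]
lemma inv01 (g : SL2C) : (g⁻¹) 0 1 = - g 0 1 := by
  simp [Matrix.SpecialLinearGroup.coe_inv, Matrix.adjugate_fin_two]
lemma inv10 (g : SL2C) : (g⁻¹) 1 0 = - g 1 0 := by
  simp [Matrix.SpecialLinearGroup.coe_inv, Matrix.adjugate_fin_two]
lemma inv11 (g : SL2C) : (g⁻¹) 1 1 = g 0 0 := by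
  simp [Matrix.SpecialLinearGroup.coe_inv, Matrix.adjugate_fin_two]
lemma one00 : (1 : SL2C) 0 0 = 1 := by simp
lemma one01 : (1 : SL2C) 0 1 = 0 := by simp
lemma one10 : (1 : SL2C) 1 0 = 0 := by simp
lemma one11 : (1 : SL2C) 1 1 = 1 := by simp
lemma neg_ap (g : SL2C) (i j : Fin 2) : (-g) i j = - g i j := by simp

lemma u00 (z : ℂ) : (uMat z) 0 0 = 1 := rfl
lemma u01 (z : ℂ) : (uMat z) 0 1 = z := rfl
lemma u10 (z : ℂ) : (uMat z) 1 0 = 0 := rfl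
lemma u11 (z : ℂ) : (uMat z) 1 1 = 1 := rfl

/-- lower triangular unipotent -/
def lMat (t : ℂ) : SL2C := ⟨!![1, 0; t, 1], by simp [Matrix.det_fin_two_of]⟩
lemma l00 (z : ℂ) : (lMat z) 0 0 = 1 := rfl
lemma l01 (z : ℂ) : (lMat z) 0 1 = 0 := rfl
lemma l10 (z : ℂ) : (lMat z) 1 0 = z := rfl
lemma l11 (z : ℂ) : (lMat z) 1 1 = 1 := rfl

lemma t00 (a : ℝ) (ha : a ≠ 0) (z : ℂ) : (tri a ha z) 0 0 = a := rfl
lemma t01 (a : ℝ) (ha : a ≠ 0) (z : ℂ) : (tri a ha z) 0 1 = z := rfl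
lemma t10 (a : ℝ) (ha : a ≠ 0) (z : ℂ) : (tri a ha z) 1 0 = 0 := rfl
lemma t11 (a : ℝ) (ha : a ≠ 0) (z : ℂ) : (tri a ha z) 1 1 = (a : ℂ)⁻¹ := rfl

attribute [local simp] mul00 mul01 mul10 mul11 inv00 inv01 inv10 inv11 one00 one01 one10 one11
  u00 u01 u10 u11 l00 l01 l10 l11 t00 t01 t10 t11

lemma u_zero : uMat 0 = 1 := by apply SL_ext <;> simp
lemma u_add (z w : ℂ) : uMat (z + w) = uMat z * uMat w := by
  apply SL_ext <;> simp [add_comm]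
lemma u_inv (z : ℂ) : (uMat z)⁻¹ = uMat (-z) := by apply SL_ext <;> simp
lemma continuous_u : Continuous uMat := by
  apply continuous_SL <;> simp <;> fun_prop
lemma continuous_l : Continuous lMat := by
  apply continuous_SL <;> simp <;> fun_prop

/-- Right actions of `SL(2,ℂ)` of the kind we need. -/
structure RA {X : Type*} [TopologicalSpace X] (ax : X → SL2C → X) : Prop where
  one : ∀ x, ax x 1 = x
  mul : ∀ x g h, ax x (g * h) = ax (ax x g) h
  neg : ∀ x g, ax x (-g) = ax x g
  cont : Continuous fun p : X × SL2C => ax p.1 p.2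
  opn : ∀ x, IsOpenMap (ax x)
  trans : ∀ x y, ∃ g, ax x g = y
  disc : ∀ x, ∃ W ∈ nhds (1 : SL2C), ∀ g ∈ W, ax x g = x → g = 1

/-- right action of `SL(2,ℂ)` on `Γ\G`. -/
def axΓ (Γ : Subgroup PSL2C) (x : XΓ Γ) (g : SL2C) : XΓ Γ := act Γ x (pr g)

lemma pr_isOpenQuotientMap : IsOpenQuotientMap pr := QuotientGroup.isOpenQuotientMap_mk

instance instTG_PSL2C : IsTopologicalGroup PSL2C := QuotientGroup.instIsTopologicalGroup _

lemma mkX_isOpenQuotientMap (Γ : Subgroup PSL2C) : IsOpenQuotientMap (mkX Γ) := by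
  refine ⟨Quotient.mk''_surjective, continuous_quotient_mk', ?_⟩
  intro s hs
  have : IsOpen ((mkX Γ) ⁻¹' ((mkX Γ) '' s)) := by
    have h : (mkX Γ) ⁻¹' ((mkX Γ) '' s) = ⋃ γ : Γ, (fun g => (γ : PSL2C) * g) ⁻¹' s := by
      ext g
      simp only [Set.mem_preimage, Set.mem_image, Set.mem_iUnion]
      constructor
      · rintro ⟨h, hs, e⟩
        have e' := Quotient.exact' e
        rw [QuotientGroup.rightRel_apply] at e'
        refine ⟨⟨_, Γ.inv_mem e'⟩, ?_⟩
        simpa using hs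
      · rintro ⟨γ, h⟩
        refine ⟨_, h, ?_⟩
        apply Quotient.sound'
        rw [QuotientGroup.rightRel_apply]
        simp
    rw [h]
    exact isOpen_iUnion fun γ => hs.preimage (continuous_const.mul continuous_id)
  exact this

lemma act_mkX (Γ : Subgroup PSL2C) (g h : PSL2C) : act Γ (mkX Γ g) h = mkX Γ (g * h) := rfl

lemma mkX_eq (Γ : Subgroup PSL2C) (g h : PSL2C) : mkX Γ g = mkX Γ h ↔ h * g⁻¹ ∈ Γ := by
  rw [← QuotientGroup.rightRel_apply]
  exact Quotient.eq''

lemma pr_neg (g : SL2C) : pr (-g) = pr g := by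
  refine QuotientGroup.eq.2 ?_
  rw [Matrix.SpecialLinearGroup.mem_center_iff]
  refine ⟨-1, by simp, ?_⟩
  have e : (-g)⁻¹ * g = -1 := by
    have : -g = (-1) * g := by simp
    rw [inv_mul_eq_iff_eq_mul]; simp
  rw [e]
  ext i j
  fin_cases i <;> fin_cases j <;> simp

lemma pr_eq_one {g : SL2C} (h : pr g = 1) : g = 1 ∨ g = -1 := by
  have h' : g ∈ Subgroup.center SL2C := (QuotientGroup.eq_one_iff g).1 h
  rw [Matrix.SpecialLinearGroup.mem_center_iff] at h'
  obtain ⟨r, hr, e⟩ := h'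
  simp at hr
  rcases hr with rfl | rfl
  · left; apply Subtype.ext; rw [← e]; simp
  · right; apply Subtype.ext; rw [← e]; ext i j; fin_cases i <;> fin_cases j <;> simp

lemma ne_neg_one_nhds : ∀ᶠ g in nhds (1 : SL2C), g ≠ -1 := by
  apply isOpen_ne.mem_nhds
  intro h
  have := congrArg (fun g : SL2C => g 0 0) h
  simp at this
  norm_num [Complex.ext_iff] at this

lemma RA_axΓ (Γ : Subgroup PSL2C) (hdisc : DiscreteTopology Γ) : RA (axΓ Γ) where
  one x := by
    obtain ⟨g, rfl⟩ := (mkX_isOpenQuotientMap Γ).surjective x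
    simp [axΓ, act_mkX]
  mul x g h := by
    obtain ⟨k, rfl⟩ := (mkX_isOpenQuotientMap Γ).surjective x
    simp [axΓ, act_mkX, mul_assoc]
  neg x g := by simp [axΓ, pr_neg]
  cont := by
    have h := (mkX_isOpenQuotientMap Γ).prodMap (IsOpenQuotientMap.id (X := SL2C))
    rw [← h.continuous_comp_iff]
    have : (fun p : XΓ Γ × SL2C => axΓ Γ p.1 p.2) ∘ Prod.map (mkX Γ) id
      = fun p : PSL2C × SL2C => mkX Γ (p.1 * pr p.2) := rfl
    rw [this]
    exact (mkX_isOpenQuotientMap Γ).continuous.comp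
      (continuous_fst.mul (pr_isOpenQuotientMap.continuous.comp continuous_snd))
  opn x := by
    obtain ⟨k, rfl⟩ := (mkX_isOpenQuotientMap Γ).surjective x
    have : axΓ Γ (mkX Γ k) = mkX Γ ∘ (fun g => k * g) ∘ pr := rfl
    rw [this]
    exact (mkX_isOpenQuotientMap Γ).isOpenMap.comp
      ((isOpenMap_mul_left k).comp pr_isOpenQuotientMap.isOpenMap)
  trans x y := by
    obtain ⟨k, rfl⟩ := (mkX_isOpenQuotientMap Γ).surjective x
    obtain ⟨l, rfl⟩ := (mkX_isOpenQuotientMap Γ).surjective y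
    obtain ⟨g, hg⟩ := pr_isOpenQuotientMap.surjective (k⁻¹ * l)
    exact ⟨g, by simp [axΓ, act_mkX, hg]⟩
  disc x := by
    obtain ⟨k, rfl⟩ := (mkX_isOpenQuotientMap Γ).surjective x
    have h1 : ({1} : Set Γ) ∈ nhds (1 : Γ) := by
      rw [nhds_discrete]; exact Set.mem_singleton _
    rw [nhds_subtype_eq_comap] at h1
    obtain ⟨V, hV, hV'⟩ := h1
    have hc : Continuous fun g : SL2C => k * pr g * k⁻¹ :=
      (continuous_const.mul pr_isOpenQuotientMap.continuous).mul continuous_const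
    have h2 : (fun g : SL2C => k * pr g * k⁻¹) ⁻¹' V ∈ nhds (1 : SL2C) := by
      apply hc.continuousAt.preimage_mem_nhds
      simpa using hV
    refine ⟨_, Filter.inter_mem h2 ne_neg_one_nhds, ?_⟩
    rintro g ⟨hg, hg'⟩ e
    have e2 : k * pr g * k⁻¹ ∈ Γ := by
      have e3 : mkX Γ k = mkX Γ (k * pr g) := e.symm
      rwa [mkX_eq] at e3
    have e4 : (⟨_, e2⟩ : Γ) = 1 := hV' hg
    have e5 : k * pr g * k⁻¹ = 1 := congrArg Subtype.val e4
    have e6 : pr g = 1 := by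
      have := mul_inv_eq_one.1 e5
      exact mul_eq_left.1 this
    exact (pr_eq_one e6).resolve_right hg'

instance instSC_XΓ (Γ : Subgroup PSL2C) : SecondCountableTopology (XΓ Γ) := by
  have : SecondCountableTopology PSL2C :=
    pr_isOpenQuotientMap.isQuotientMap.secondCountableTopology pr_isOpenQuotientMap.isOpenMap
  exact (mkX_isOpenQuotientMap Γ).isQuotientMap.secondCountableTopology
    (mkX_isOpenQuotientMap Γ).isOpenMap



/-! ### Generalities on the action, and transitivity -/

/-- distance of `g` from the identity -/
def dist1 (g : SL2C) : ℝ := ‖g 0 0 - 1‖ + ‖g 0 1‖ + ‖g 1 0‖ + ‖g 1 1 - 1‖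

lemma dist1_nonneg (g : SL2C) : 0 ≤ dist1 g := by unfold dist1; positivity

lemma continuous_dist1 : Continuous dist1 := by
  have h0 := continuous_entry 0 0
  have h1 := continuous_entry 0 1
  have h2 := continuous_entry 1 0
  have h3 := continuous_entry 1 1
  unfold dist1
  fun_prop

lemma tendsto_one_of_dist1 {ι : Type*} {l : Filter ι} {f : ι → SL2C}
    (h : Tendsto (fun i => dist1 (f i)) l (nhds 0)) : Tendsto f l (nhds 1) := by
  have hz : ∀ φ : ι → ℂ, (∀ i, ‖φ i‖ ≤ dist1 (f i)) → Tendsto φ l (nhds 0) := fun φ hφ =>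
    squeeze_zero_norm hφ h
  have n0 := fun i => norm_nonneg (f i 0 0 - 1)
  have n1 := fun i => norm_nonneg (f i 0 1)
  have n2 := fun i => norm_nonneg (f i 1 0)
  have n3 := fun i => norm_nonneg (f i 1 1 - 1)
  rw [tendsto_SL]
  simp only [one00, one01, one10, one11]
  refine ⟨?_, ?_, ?_, ?_⟩
  · rw [← tendsto_sub_nhds_zero_iff]
    apply hz; intro i; unfold dist1; linarith [n0 i, n1 i, n2 i, n3 i]
  · apply hz; intro i; unfold dist1; linarith [n0 i, n1 i, n2 i, n3 i]
  · apply hz; intro i; unfold dist1; linarith [n0 i, n1 i, n2 i, n3 i]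
  · rw [← tendsto_sub_nhds_zero_iff]
    apply hz; intro i; unfold dist1; linarith [n0 i, n1 i, n2 i, n3 i]

lemma dist1_one : dist1 1 = 0 := by simp [dist1]

namespace RA

variable {X : Type*} [TopologicalSpace X] {ax : X → SL2C → X}

lemma mul_inv (h : RA ax) (x : X) (g : SL2C) : ax (ax x g) g⁻¹ = x := by
  rw [← h.mul, mul_inv_cancel, h.one]

lemma inv_mul (h : RA ax) (x : X) (g : SL2C) : ax (ax x g⁻¹) g = x := by
  rw [← h.mul, inv_mul_cancel, h.one]

lemma contr (h : RA ax) (g : SL2C) : Continuous fun x => ax x g :=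
  h.cont.comp (continuous_id.prodMk continuous_const)

lemma contl (h : RA ax) (x : X) : Continuous (ax x) :=
  h.cont.comp (continuous_const.prodMk continuous_id)

lemma tend (h : RA ax) {ι : Type*} {l : Filter ι} {f : ι → X} {k : ι → SL2C} {x : X} {g : SL2C}
    (hf : Tendsto f l (nhds x)) (hk : Tendsto k l (nhds g)) :
    Tendsto (fun i => ax (f i) (k i)) l (nhds (ax x g)) :=
  (h.cont.tendsto (x, g)).comp (hf.prodMk_nhds hk)

lemma lift (h : RA ax) {f : ℕ → X} {x : X} (hf : Tendsto f atTop (nhds x)) :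
    ∃ k : ℕ → SL2C, Tendsto k atTop (nhds 1) ∧ ∀ n, f n = ax x (k n) := by
  have h1 : ∀ n, ∃ g, ax x g = f n ∧
      dist1 g ≤ sInf (dist1 '' {g | ax x g = f n}) + 1 / (n + 1 : ℝ) := by
    intro n
    have hne : (dist1 '' {g | ax x g = f n}).Nonempty := Set.Nonempty.image _ (h.trans x (f n))
    obtain ⟨_, ⟨g, hg, rfl⟩, hlt⟩ := exists_lt_of_csInf_lt hne
      (lt_add_of_pos_right _ (Nat.one_div_pos_of_nat (α := ℝ) (n := n)))
    exact ⟨g, hg, hlt.le⟩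
  choose k hk hk' using h1
  refine ⟨k, ?_, fun n => (hk n).symm⟩
  apply tendsto_one_of_dist1
  rw [Metric.tendsto_atTop]
  intro ε hε
  have hW : {g : SL2C | dist1 g < ε / 2} ∈ nhds (1 : SL2C) := by
    apply (isOpen_lt continuous_dist1 continuous_const).mem_nhds
    simp only [Set.mem_ofPred_eq, dist1_one]; linarith
  have hW2 : ax x '' {g : SL2C | dist1 g < ε / 2} ∈ nhds x := by
    have := (h.opn x).image_mem_nhds hW
    rwa [h.one] at this
  obtain ⟨N1, hN1⟩ := eventually_atTop.1 (hf hW2)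
  obtain ⟨N2, hN2⟩ := exists_nat_one_div_lt (half_pos hε)
  refine ⟨max N1 N2, fun n hn => ?_⟩
  obtain ⟨g, hg, hg'⟩ := hN1 n (le_of_max_le_left hn)
  have h2 : sInf (dist1 '' {g | ax x g = f n}) ≤ dist1 g :=
    csInf_le ⟨0, by rintro _ ⟨g, -, rfl⟩; exact dist1_nonneg g⟩ ⟨g, hg', rfl⟩
  have h3 : 1 / (n + 1 : ℝ) ≤ 1 / (N2 + 1 : ℝ) :=
    Nat.one_div_le_one_div (le_of_max_le_right hn)
  have h4 := hk' n
  have h5 : dist1 g < ε / 2 := hg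
  rw [Real.dist_eq, sub_zero, abs_of_nonneg (dist1_nonneg _)]
  linarith

end RA

lemma SL_gen (S : Set SL2C) (hm : ∀ g ∈ S, ∀ h ∈ S, g * h ∈ S) (hu : ∀ z, uMat z ∈ S)
    (hl : ∀ z, lMat z ∈ S) (g : SL2C) : g ∈ S := by
  have key : ∀ g : SL2C, g 1 0 ≠ 0 → g ∈ S := by
    intro g hc
    have e : g = uMat ((g 0 0 - 1) / g 1 0) * lMat (g 1 0) * uMat ((g 1 1 - 1) / g 1 0) := by
      have hd := SL_det g
      apply SL_ext
      · simp; field_simp; ring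
      · simp; field_simp; linear_combination (-1) * hd
      · simp
      · simp; field_simp; ring
    rw [e]
    exact hm _ (hm _ (hu _) _ (hl _)) _ (hu _)
  by_cases hc : g 1 0 = 0
  · have h1 : g = (g * lMat 1) * lMat (-1) := by
      apply SL_ext <;> simp
    rw [h1]
    refine hm _ (key _ ?_) _ (hl _)
    have hd := SL_det g
    simp [hc] at hd ⊢
    intro h0
    simp [h0] at hd
  · exact key g hc

/-- the contracting/expanding element -/
def aEl : SL2C := tri (1/2) (by norm_num) 0

lemma aEl_pow (n : ℕ) : aEl ^ n = tri ((1/2)^n) (by positivity) 0 := by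
  induction n with
  | zero => apply SL_ext <;> simp
  | succ n ih => rw [pow_succ, ih, aEl]; apply SL_ext <;> simp [pow_succ, mul_comm]

/-- Invariant finite measure -/
structure RM {X : Type*} [TopologicalSpace X] [MeasurableSpace X] (ax : X → SL2C → X)
    (μ : MeasureTheory.Measure X) : Prop where
  ne : μ ≠ 0
  fin : MeasureTheory.IsFiniteMeasure μ
  inv : ∀ g : SL2C, MeasureTheory.Measure.map (fun x => ax x g) μ = μ

section meas
open MeasureTheory

variable {X : Type*} [TopologicalSpace X] [MeasurableSpace X] [BorelSpace X]
  [SecondCountableTopology X] {ax : X → SL2C → X} {μ : Measure X}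

lemma RM.pre (h : RA ax) (hμ : RM ax μ) (g : SL2C) {s : Set X} (hs : MeasurableSet s) :
    μ {x | ax x g ∈ s} = μ s := by
  conv_rhs => rw [← hμ.inv g]
  rw [Measure.map_apply (h.contr g).measurable hs]
  rfl

lemma RM.pos (h : RA ax) (hμ : RM ax μ) {O : Set X} (hO : IsOpen O) (hne : O.Nonempty) :
    μ O ≠ 0 := by
  intro h0
  apply hμ.ne
  rw [← Measure.measure_univ_eq_zero]
  apply measure_null_of_locally_null
  intro x _
  obtain ⟨o, ho⟩ := hne
  obtain ⟨g, hg⟩ := h.trans x o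
  refine ⟨{y | ax y g ∈ O}, ?_, ?_⟩
  · rw [nhdsWithin_univ]
    exact (hO.preimage (h.contr g)).mem_nhds (by simpa [hg] using ho)
  · rw [RM.pre h hμ g hO.measurableSet, h0]

lemma lemC (h : RA ax) (hμ : RM ax μ) {W O : Set X} (hW : IsOpen W) (hO : IsOpen O)
    (hWn : W.Nonempty) (hOn : O.Nonempty) : ∃ (n : ℕ), ∃ w ∈ W, ax w (aEl ^ n) ∈ O := by
  haveI := hμ.fin
  by_contra hcon
  push Not at hcon
  set E : Set X := {x | ∃ n : ℕ, ax x (aEl ^ n)⁻¹ ∈ W} with hE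
  have hEo : IsOpen E := by
    have : E = ⋃ n : ℕ, (fun x => ax x (aEl ^ n)⁻¹) ⁻¹' W := by ext; simp [hE]
    rw [this]
    exact isOpen_iUnion fun n => hW.preimage (h.contr _)
  have hOE : ∀ x ∈ O, x ∉ E := by
    rintro x hx ⟨n, hn⟩
    apply hcon n _ hn
    rwa [h.inv_mul]
  let S : SL2C → Set X := fun g => {x | x ∈ E ∧ ax x g ∉ E}
  have hSm : ∀ g, MeasurableSet (S g) := fun g =>
    hEo.measurableSet.inter (hEo.preimage (h.contr g)).measurableSet.compl
  have hadd : ∀ g k, μ (S (g * k)) ≤ μ (S g) + μ (S k) := by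
    intro g k
    have h1 : S (g * k) ⊆ S g ∪ {x | ax x g ∈ S k} := by
      rintro x ⟨hx, hx'⟩
      rw [h.mul] at hx'
      by_cases hg : ax x g ∈ E
      · exact Or.inr ⟨hg, hx'⟩
      · exact Or.inl ⟨hx, hg⟩
    calc μ (S (g * k)) ≤ μ (S g) + μ {x | ax x g ∈ S k} :=
          (measure_mono h1).trans (measure_union_le _ _)
      _ = _ := by rw [RM.pre h hμ g (hSm k)]
  have hstep : ∀ x ∈ E, ax x aEl ∈ E := by
    rintro x ⟨n, hn⟩
    refine ⟨n + 1, ?_⟩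
    have e : aEl * (aEl ^ (n + 1))⁻¹ = (aEl ^ n)⁻¹ := by
      rw [pow_succ, _root_.mul_inv_rev, ← mul_assoc, mul_inv_cancel, one_mul]
    rw [← h.mul, e]
    exact hn
  have ha1 : μ (S aEl) = 0 := by
    have : S aEl = ∅ := by
      ext x; simp only [S, Set.mem_ofPred_eq, Set.mem_empty_iff_false, iff_false, not_and, not_not]
      exact hstep x
    rw [this, measure_empty]
  have ha2 : μ (S aEl⁻¹) = 0 := by
    have e : S aEl⁻¹ = E \ {x | ax x aEl⁻¹ ∈ E} := rfl
    have hsub : {x | ax x aEl⁻¹ ∈ E} ⊆ E := by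
      intro x hx
      have := hstep _ hx
      rwa [h.inv_mul] at this
    rw [e, measure_sdiff hsub (hEo.preimage (h.contr _)).measurableSet.nullMeasurableSet
      (measure_ne_top _ _), RM.pre h hμ _ hEo.measurableSet, tsub_self]
  have h1 : μ (S 1) = 0 := by
    have : S 1 = ∅ := by
      ext x; simp [S, h.one]
    rw [this, measure_empty]
  have hpow : ∀ g, μ (S g) = 0 → ∀ n : ℕ, μ (S (g ^ n)) = 0 := by
    intro g hg n
    induction n with
    | zero => simpa using h1
    | succ n ih =>
      have := hadd (g ^ n) g
      rw [ih, hg, zero_add, nonpos_iff_eq_zero] at this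
      rwa [pow_succ]
  have hlim : ∀ k : ℕ → SL2C, Tendsto k atTop (nhds 1) →
      Tendsto (fun n => μ (S (k n))) atTop (nhds 0) := by
    intro k hk
    have := tendsto_measure_of_tendsto_indicator_of_isFiniteMeasure (L := atTop) (A := ∅) (As := fun n => S (k n)) μ
      (fun n => hSm _) ?_
    · simpa using this
    · intro x
      by_cases hx : x ∈ E
      · have : ∀ᶠ n in atTop, ax x (k n) ∈ E := by
          have h2 := h.tend (tendsto_const_nhds (x := x) (f := atTop)) hk
          rw [h.one] at h2
          exact h2 (hEo.mem_nhds hx)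
        filter_upwards [this] with n hn
        simp [S, hn]
      · simp [S, hx]
  have hconj : ∀ b c : SL2C, b * c = 1 → (∀ n : ℕ, μ (S (b ^ n)) = 0) →
      (∀ n : ℕ, μ (S (c ^ n)) = 0) →
      ∀ g, Tendsto (fun n : ℕ => b ^ n * g * c ^ n) atTop (nhds 1) → μ (S g) = 0 := by
    intro b c hbc hb hc g hg
    have hle : ∀ n : ℕ, μ (S g) ≤ μ (S (b ^ n * g * c ^ n)) := by
      intro n
      have hc' : c = b⁻¹ := (inv_eq_of_mul_eq_one_right hbc).symm
      have e : g = c ^ n * (b ^ n * g * c ^ n) * b ^ n := by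
        rw [hc']; simp [mul_assoc]
      conv_lhs => rw [e]
      refine (hadd _ _).trans ?_
      rw [hb n, add_zero]
      refine (hadd _ _).trans ?_
      rw [hc n, zero_add]
    exact le_antisymm (ge_of_tendsto' (hlim _ hg) hle) bot_le
  have hq : Tendsto (fun n : ℕ => ((1:ℂ)/2) ^ n * (1/2) ^ n) atTop (nhds 0) := by
    have : ∀ n : ℕ, ((1:ℂ)/2) ^ n * (1/2) ^ n = (1/4) ^ n := by
      intro n; rw [← mul_pow]; norm_num
    simp_rw [this]
    apply tendsto_pow_atTop_nhds_zero_of_norm_lt_one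
    norm_num
  have hall : ∀ g, μ (S g) = 0 := by
    intro g
    refine SL_gen {g | μ (S g) = 0} ?_ ?_ ?_ g
    · intro g hg k hk
      have := hadd g k
      rw [hg, hk, zero_add, nonpos_iff_eq_zero] at this
      exact this
    · intro z
      refine hconj aEl aEl⁻¹ (by simp) (hpow _ ha1) (hpow _ ha2) _ ?_
      rw [tendsto_SL]
      simp only [inv_pow, aEl_pow]
      simp
      have := hq.mul_const z
      simp at this
      refine this.congr fun n => ?_
      ring
    · intro z
      refine hconj aEl⁻¹ aEl (by simp) (hpow _ ha2) (hpow _ ha1) _ ?_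
      rw [tendsto_SL]
      simp only [inv_pow, aEl_pow]
      simp
      have := hq.mul_const z
      simp at this
      refine this.congr fun n => ?_
      ring
  obtain ⟨w, hw⟩ := hWn
  obtain ⟨o, ho⟩ := hOn
  obtain ⟨g, hg⟩ := h.trans w o
  have hopen : IsOpen (E ∩ {x | ax x g ∈ O}) := hEo.inter (hO.preimage (h.contr g))
  refine RM.pos h hμ hopen ⟨w, ⟨0, by simpa [h.one] using hw⟩, by simpa [hg] using ho⟩ ?_
  refine measure_mono_null ?_ (hall g)
  rintro x ⟨hx, hx'⟩
  exact ⟨hx, hOE _ hx'⟩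

end meas


/-! ### Density lemma D and compactness of the thick part -/

lemma dist1_basis {V : Set SL2C} (hV : V ∈ nhds (1 : SL2C)) :
    ∃ ε > 0, ∀ g, dist1 g < ε → g ∈ V := by
  have h1 : Tendsto (fun g : SL2C => g) (comap dist1 (nhds 0)) (nhds 1) :=
    tendsto_one_of_dist1 tendsto_comap
  have h2 := h1 hV
  rw [mem_map, mem_comap] at h2
  obtain ⟨t, ht, hts⟩ := h2
  obtain ⟨ε, hε, hb⟩ := Metric.mem_nhds_iff.1 ht
  refine ⟨ε, hε, fun g hg => hts ?_⟩
  apply hb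
  rw [Metric.mem_ball, Real.dist_eq, sub_zero, abs_of_nonneg (dist1_nonneg g)]
  exact hg

/-- `D_δ` -/
def dMat (δ : ℝ) (h : 0 < δ) : SL2C := tri δ h.ne' 0

section measD
open MeasureTheory

variable {X : Type*} [TopologicalSpace X] [MeasurableSpace X] [BorelSpace X]
  [SecondCountableTopology X] {ax : X → SL2C → X} {μ : Measure X}

lemma lemD (h : RA ax) (hμ : RM ax μ) {F : Set X} (hF : IsClosed F)
    (hD : ∀ x ∈ F, ∀ δ (hδ : 0 < δ), ax x (dMat δ hδ) ∈ F) {z : X}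
    (hz : ∀ ζ : ℂ, ax z (uMat ζ) ∈ F) : F = Set.univ := by
  by_contra hne
  obtain ⟨p, hp⟩ := (Set.ne_univ_iff_exists_notMem F).1 hne
  have h1 : ∀ᶠ q : X × SL2C in nhds (p, 1), ax q.1 q.2 ∈ Fᶜ := by
    apply (h.cont.tendsto (p, 1)).eventually
    simp only [h.one]
    exact hF.isOpen_compl.mem_nhds hp
  rw [nhds_prod_eq] at h1
  obtain ⟨O, hO, V, hV, hOV⟩ := mem_prod_iff.1 h1
  obtain ⟨O', hO'O, hO', hpO'⟩ := mem_nhds_iff.1 hO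
  obtain ⟨ε, hε, hb⟩ := dist1_basis hV
  have hc00 := continuous_entry 0 0
  have hc10 := continuous_entry 1 0
  have hc11 := continuous_entry 1 1
  set ε' : ℝ := min (1/2) (ε / 8) with hε'
  have hε'0 : 0 < ε' := by positivity
  have hWo : IsOpen {g : SL2C | ‖g 1 0‖ < ε' ∧ ‖g 1 1 - 1‖ < ε'} :=
    (isOpen_lt hc10.norm continuous_const).inter
      (isOpen_lt (hc11.sub continuous_const).norm continuous_const)
  obtain ⟨n, w, ⟨g, ⟨hg1, hg2⟩, rfl⟩, hw⟩ := lemC h hμ (h.opn z _ hWo) hO'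
    ⟨_, 1, by simp [hε'0], rfl⟩ ⟨p, hpO'⟩
  have hε1 : ε' ≤ 1/2 := min_le_left _ _
  have hε2 : ε' ≤ ε / 8 := min_le_right _ _
  have hd : 1/2 ≤ ‖g 1 1‖ := by
    have := norm_sub_norm_le (1:ℂ) (1 - g 1 1)
    rw [norm_sub_rev 1 (g 1 1)] at this
    simp at this
    linarith
  have hd0 : g 1 1 ≠ 0 := by
    intro h0; rw [h0] at hd; norm_num at hd
  set q : SL2C := (aEl ^ n)⁻¹ * (uMat (- (g 0 1 / g 1 1)) * g) * aEl ^ n with hq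
  have hdet := SL_det g
  have e00 : g 0 0 - g 0 1 / g 1 1 * g 1 0 = (g 1 1)⁻¹ := by
    field_simp; linear_combination hdet
  have hq00 : q 0 0 = (g 1 1)⁻¹ := by
    rw [hq, aEl_pow]; simp
    rw [← e00]; field_simp; ring
  have hq01 : q 0 1 = 0 := by
    rw [hq, aEl_pow]; simp
    field_simp; ring
  have hq10 : q 1 0 = (1/4) ^ n * g 1 0 := by
    rw [hq, aEl_pow]; simp
    rw [show (4:ℂ) = 2 * 2 by norm_num, mul_pow]
    field_simp
  have hq11 : q 1 1 = g 1 1 := by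
    rw [hq, aEl_pow]; simp; field_simp
  have hqV : q⁻¹ ∈ V := by
    apply hb
    unfold dist1
    simp only [inv00, inv01, inv10, inv11, hq00, hq01, hq10, hq11]
    have e1 : ‖(g 1 1)⁻¹ - 1‖ ≤ 2 * ε' := by
      have : (g 1 1)⁻¹ - 1 = (1 - g 1 1) / g 1 1 := by field_simp
      rw [this, norm_div, norm_sub_rev]
      rw [div_le_iff₀ (by linarith)]
      nlinarith
    have e2 : ‖-((1/4) ^ n * g 1 0)‖ ≤ ε' := by
      rw [norm_neg, norm_mul]
      have : ‖((1:ℂ)/4) ^ n‖ ≤ 1 := by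
        rw [norm_pow]; apply pow_le_one₀ (norm_nonneg _); norm_num
      nlinarith [norm_nonneg (g 1 0)]
    simp only [neg_zero, norm_zero]
    linarith
  have key : ax (ax (ax z g) (aEl ^ n)) q⁻¹ = ax (ax z (uMat (g 0 1 / g 1 1))) (aEl ^ n) := by
    rw [← h.mul, ← h.mul, ← h.mul]
    congr 1
    rw [hq, ← u_inv]
    group
  have hmem : ax (ax z (uMat (g 0 1 / g 1 1))) (aEl ^ n) ∈ F := by
    rw [aEl_pow]
    exact hD _ (hz _) _ (by positivity)
  rw [← key] at hmem
  exact hOV (Set.mk_mem_prod (hO'O hw) hqV) hmem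

end measD

/-! compactness -/

/-- the traceless part data of a matrix -/
def tau (g : SL2C) : ℂ × ℂ × ℂ := (g 0 0 - g 1 1, g 0 1, g 1 0)

lemma continuous_tau : Continuous tau := by
  have hc00 := continuous_entry 0 0
  have hc10 := continuous_entry 1 0
  have hc11 := continuous_entry 1 1
  have hc01 := continuous_entry 0 1
  unfold tau
  fun_prop

lemma tau_one : tau 1 = 0 := by simp [tau]

/-- thick part -/
def Kset {X : Type*} (ax : X → SL2C → X) (ε : ℝ) : Set X :=
  {x | ∀ g, ax x g = x → g ≠ 1 → g ≠ -1 → ε ≤ ‖tau g‖}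

instance instMS_SL2C : MeasurableSpace SL2C := borel _
instance instBS_SL2C : BorelSpace SL2C := ⟨rfl⟩

open MeasureTheory in
lemma modular_one (g : SL2C) : Measure.modularCharacter g = 1 := by
  have hne : ∀ k : SL2C, Measure.modularCharacter k ≠ 0 := fun k => (Measure.modularCharacterFun_pos k).ne'
  have hcm : ∀ g k k' : SL2C, k * k' = k' * k * g → Measure.modularCharacter g = 1 := by
    intro g k k' e
    have := congrArg Measure.modularCharacter e
    simp only [map_mul] at this
    have h1 := mul_ne_zero (hne k') (hne k)
    rw [mul_comm (Measure.modularCharacter k)] at this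
    exact (mul_eq_left₀ h1).1 this.symm
  refine SL_gen {g | Measure.modularCharacter g = 1} ?_ ?_ ?_ g
  · intro g hg k hk
    rw [Set.mem_ofPred_eq] at *
    rw [map_mul, hg, hk, one_mul]
  · intro z
    apply hcm _ (tri 2 (by norm_num) 0) (uMat (4*z/3))
    apply SL_ext <;> simp
    ring
  · intro z
    apply hcm _ (tri (1/2) (by norm_num) 0) (lMat (4*z/3))
    apply SL_ext <;> simp
    ring

open MeasureTheory in
lemma haar_right (g : SL2C) (s : Set SL2C) :
    Measure.haar ((fun k => k * g) ⁻¹' s) = Measure.haar s := by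
  have h1 := Measure.map_right_mul_eq_modularCharacterFun_smul (Measure.haar (G := SL2C)) g
  have h2 : Measure.modularCharacterFun g = 1 := modular_one g
  rw [h2, one_smul] at h1
  conv_rhs => rw [← h1]
  exact ((Homeomorph.mulRight g).toMeasurableEquiv.map_apply s).symm

section compact
open scoped Pointwise
open MeasureTheory

variable {X : Type*} [TopologicalSpace X] [MeasurableSpace X] [BorelSpace X]
  [SecondCountableTopology X] {ax : X → SL2C → X} {μ : Measure X}

lemma vol_comp (h : RA ax) (hμ : RM ax μ) {B : Set SL2C} (hB : IsOpen B) (y y' : X)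
    (hinj : Set.InjOn (ax y') B) :
    μ (ax y '' B) * Measure.haar B ≤ μ (ax y' '' B) * Measure.haar B⁻¹ := by
  haveI := hμ.fin
  obtain ⟨g₀, rfl⟩ := h.trans y y'
  set lam : Measure SL2C := Measure.haar with hlam
  set Q : Set (X × SL2C) := {p | ∃ b ∈ B, p.1 = ax y b ∧ g₀⁻¹ * (b * p.2) ∈ B} with hQ
  have hQo : IsOpen Q := by
    have e : Q = Prod.map (ax y) id '' {p : SL2C × SL2C | p.1 ∈ B ∧ g₀⁻¹ * (p.1 * p.2) ∈ B} := by
      ext ⟨x, g⟩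
      simp only [hQ, Set.mem_ofPred_eq, Set.mem_image, Prod.exists, Prod.map_apply, id, Prod.mk.injEq]
      constructor
      · rintro ⟨b, hb, rfl, hg⟩
        exact ⟨b, g, ⟨hb, hg⟩, rfl, rfl⟩
      · rintro ⟨b, g', ⟨hb, hg⟩, rfl, rfl⟩
        exact ⟨b, hb, rfl, hg⟩
    rw [e]
    apply ((h.opn y).prodMap IsOpenMap.id)
    exact (hB.preimage continuous_fst).inter (hB.preimage (by fun_prop))
  set Q' : Set (X × SL2C) := (fun p : X × SL2C => (ax p.1 p.2⁻¹, p.2)) ⁻¹' Q with hQ'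
  have hQ'o : IsOpen Q' := by
    apply hQo.preimage
    exact (h.cont.comp (continuous_fst.prodMk continuous_snd.inv)).prodMk continuous_snd
  have e1 : (μ.prod lam) Q = (μ.prod lam) Q' := by
    rw [Measure.prod_apply_symm hQo.measurableSet, Measure.prod_apply_symm hQ'o.measurableSet]
    congr 1
    ext g
    have : (fun x => (x, g)) ⁻¹' Q' = {x | ax x g⁻¹ ∈ (fun x => (x, g)) ⁻¹' Q} := rfl
    rw [this, RM.pre h hμ]
    exact (hQo.preimage (by fun_prop)).measurableSet
  have e2 : μ (ax y '' B) * lam B ≤ (μ.prod lam) Q := by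
    rw [Measure.prod_apply hQo.measurableSet]
    calc μ (ax y '' B) * lam B = ∫⁻ x, (ax y '' B).indicator (fun _ => lam B) x ∂μ := by
          rw [lintegral_indicator (h.opn y _ hB).measurableSet, lintegral_const, mul_comm]
          simp
      _ ≤ _ := by
          apply lintegral_mono
          intro x
          dsimp only
          by_cases hx : x ∈ ax y '' B
          · rw [Set.indicator_of_mem hx]
            obtain ⟨b, hb, rfl⟩ := hx
            have : lam B = lam ((fun k => (g₀⁻¹ * b) * k) ⁻¹' B) := by
              rw [hlam, measure_preimage_mul]
            rw [this]
            apply measure_mono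
            intro k hk
            exact ⟨b, hb, rfl, by simpa [mul_assoc] using hk⟩
          · rw [Set.indicator_of_notMem hx]; exact bot_le
  have e3 : (μ.prod lam) Q' ≤ μ (ax (ax y g₀) '' B) * lam B⁻¹ := by
    rw [Measure.prod_apply hQ'o.measurableSet]
    calc _ ≤ ∫⁻ x, (ax (ax y g₀) '' B).indicator (fun _ => lam B⁻¹) x ∂μ := by
          apply lintegral_mono
          intro x
          dsimp only
          by_cases hx : x ∈ ax (ax y g₀) '' B
          · rw [Set.indicator_of_mem hx]
            obtain ⟨b, hb, rfl⟩ := hx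
            have : lam B⁻¹ = lam ((fun k => k * (g₀ * b)⁻¹) ⁻¹' B⁻¹) := by
              rw [hlam, haar_right]
            rw [this]
            apply measure_mono
            rintro k ⟨b', hb', hb'e, hk⟩
            have e4 : ax (ax y g₀) b = ax (ax y g₀) (g₀⁻¹ * (b' * k)) := by
              have : ax (ax (ax (ax y g₀) b) k⁻¹) k = ax (ax y b') k := by
                rw [show ax (ax (ax y g₀) b) k⁻¹ = ax y b' from hb'e]
              rw [h.inv_mul] at this
              rw [this, ← h.mul, ← h.mul]
              congr 1
              group
            have e5 : b = g₀⁻¹ * (b' * k) := hinj hb hk e4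
            simp only [Set.mem_preimage, Set.mem_inv]
            rw [e5]
            simpa [mul_assoc] using hb'
          · rw [Set.indicator_of_notMem hx, nonpos_iff_eq_zero]
            convert measure_empty (μ := lam)
            ext k
            simp only [Set.mem_empty_iff_false, iff_false]
            rintro ⟨b', hb', hb'e, hk⟩
            apply hx
            refine ⟨_, hk, ?_⟩
            have : ax (ax x k⁻¹) k = ax (ax y b') k := by
                rw [show ax x k⁻¹ = ax y b' from hb'e]
            rw [h.inv_mul] at this
            rw [this, ← h.mul, ← h.mul]
            congr 1
            group
      _ = _ := by
          rw [lintegral_indicator (h.opn _ _ hB).measurableSet, lintegral_const, mul_comm]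
          simp
  exact e2.trans (e1.le.trans e3)

lemma lemE (h : RA ax) (hμ : RM ax μ) {ε : ℝ} (hε : 0 < ε) {f : ℕ → X}
    (hf : ∀ n, f n ∈ Kset ax ε) :
    ∃ y ∈ Kset ax ε, ∃ φ : ℕ → ℕ, StrictMono φ ∧ Tendsto (f ∘ φ) atTop (nhds y) := by
  haveI := hμ.fin
  -- a small neighbourhood
  have h1 : {p : SL2C × SL2C | ‖tau (p.1 * p.2⁻¹)‖ < ε ∧ p.1 * p.2⁻¹ ≠ -1} ∈
      nhds ((1, 1) : SL2C × SL2C) := by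
    have hc : Continuous fun p : SL2C × SL2C => p.1 * p.2⁻¹ := by fun_prop
    have h2 : {g : SL2C | ‖tau g‖ < ε ∧ g ≠ -1} ∈ nhds (1 : SL2C) := by
      refine Filter.inter_mem ?_ ne_neg_one_nhds
      apply (isOpen_lt continuous_tau.norm continuous_const).mem_nhds
      simpa [tau_one] using hε
    have h3 : Tendsto (fun p : SL2C × SL2C => p.1 * p.2⁻¹) (nhds (1, 1)) (nhds 1) := by
      have := hc.tendsto ((1, 1) : SL2C × SL2C)
      simpa using this
    exact h3 h2
  rw [nhds_prod_eq] at h1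
  obtain ⟨V1, hV1, V2, hV2, hVV⟩ := mem_prod_iff.1 h1
  obtain ⟨C, hC, hC1⟩ := exists_compact_mem_nhds (1 : SL2C)
  set B := interior (V1 ∩ V2 ∩ C) with hBdef
  have hBo : IsOpen B := isOpen_interior
  have hB1 : (1 : SL2C) ∈ B := by
    rw [hBdef, mem_interior_iff_mem_nhds]
    exact inter_mem (inter_mem hV1 hV2) hC1
  have hBC : B ⊆ C := fun b hb => (interior_subset hb).2
  have hinj : ∀ y ∈ Kset ax ε, Set.InjOn (ax y) B := by
    intro y hy b hb b' hb' e
    have h3 := hVV (Set.mk_mem_prod (interior_subset hb).1.1 (interior_subset hb').1.2)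
    have h4 : ax y (b * b'⁻¹) = y := by
      rw [h.mul, e, h.mul_inv]
    by_contra hne
    have := hy _ h4 (by rwa [Ne, mul_inv_eq_one]) h3.2
    exact absurd h3.1 (not_lt.2 this)
  -- finite cover
  obtain ⟨s, hs⟩ : ∃ s : Finset X, ∀ y ∈ Kset ax ε, ∃ x ∈ s, y ∈ ax x '' (C * C⁻¹) := by
    by_contra hcon
    push Not at hcon
    obtain ⟨k, hk, hk'⟩ := exists_seq_of_forall_finset_exists (fun y => y ∈ Kset ax ε)
      (fun x y => y ∉ ax x '' (C * C⁻¹)) (fun s _ => by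
        obtain ⟨y, hy, hy'⟩ := hcon s
        exact ⟨y, hy, hy'⟩)
    have hdisj : Pairwise (Function.onFun Disjoint fun n => ax (k n) '' B) := by
      have : ∀ m n, m < n → Disjoint (ax (k m) '' B) (ax (k n) '' B) := by
        intro m n hmn
        rw [Set.disjoint_left]
        rintro _ ⟨b, hb, rfl⟩ ⟨b', hb', e⟩
        apply hk' m n hmn
        refine ⟨b * b'⁻¹, Set.mul_mem_mul (hBC hb) (Set.inv_mem_inv.2 (hBC hb')), ?_⟩
        rw [h.mul, ← e, h.mul_inv]
      intro m n hmn
      rcases lt_or_gt_of_ne hmn with h' | h'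
      · exact this m n h'
      · exact (this n m h').symm
    have hsum := measure_iUnion hdisj (fun n => (h.opn (k n) _ hBo).measurableSet) (μ := μ)
    have hfinB : Measure.haar B⁻¹ ≠ ⊤ := by
      refine ((measure_mono (Set.inv_subset_inv.2 hBC)).trans_lt ?_).ne
      exact hC.inv.measure_lt_top
    have hpos : 0 < μ (ax (f 0) '' B) * Measure.haar B / Measure.haar B⁻¹ := by
      rw [ENNReal.div_pos_iff]
      refine ⟨mul_ne_zero (RM.pos h hμ (h.opn _ _ hBo) ⟨_, 1, hB1, rfl⟩) ?_, hfinB⟩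
      exact (hBo.measure_pos _ ⟨1, hB1⟩).ne'
    have hle : ∀ n, μ (ax (f 0) '' B) * Measure.haar B / Measure.haar B⁻¹ ≤ μ (ax (k n) '' B) := by
      intro n
      apply ENNReal.div_le_of_le_mul
      exact vol_comp h hμ hBo _ _ (hinj _ (hk n))
    have htop : (⊤ : ENNReal) ≤ ∑' n, μ (ax (k n) '' B) := by
      rw [← ENNReal.tsum_const_eq_top_of_ne_zero (α := ℕ) hpos.ne']
      exact ENNReal.tsum_le_tsum hle
    rw [← hsum] at htop
    exact absurd (measure_lt_top μ _) (not_lt.2 htop)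
  have hcomp : IsCompact (⋃ x ∈ s, ax x '' (C * C⁻¹)) :=
    s.isCompact_biUnion fun x _ => (hC.mul hC.inv).image (h.contl x)
  obtain ⟨y, -, φ, hφ, hy⟩ := hcomp.tendsto_subseq (x := f) (fun n => by
    obtain ⟨x, hx, hx'⟩ := hs _ (hf n)
    exact Set.mem_biUnion hx hx')
  refine ⟨y, ?_, φ, hφ, hy⟩
  obtain ⟨w, hw, hw'⟩ := h.lift hy
  intro γ hγ h1' h2'
  have hlim : Tendsto (fun n => ‖tau ((w n)⁻¹ * γ * w n)‖) atTop (nhds ‖tau γ‖) := by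
    have : Tendsto (fun n => (w n)⁻¹ * γ * w n) atTop (nhds ((1 : SL2C)⁻¹ * γ * 1)) :=
      (hw.inv.mul_const γ).mul hw
    rw [inv_one, one_mul, mul_one] at this
    exact ((continuous_tau.norm).tendsto γ).comp this
  refine ge_of_tendsto' hlim fun n => hf (φ n) _ ?_ ?_ ?_
  · have : f (φ n) = ax y (w n) := hw' n
    rw [this, ← h.mul, mul_assoc, mul_inv_cancel_left, h.mul, hγ]
  · intro e
    apply h1'
    rw [mul_assoc, inv_mul_eq_one] at e
    exact mul_eq_right.1 e.symm
  · intro e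
    apply h2'
    have : γ * w n = w n * (-1) := by rw [← e]; group
    have e2 : γ * w n = (-1) * w n := by rw [this]; simp
    exact mul_right_cancel e2

end compact


/-! ### Nondivergence of the horocycle flow -/

/-- the Zassenhaus constant -/
def e0 : ℝ := 1 / 100

lemma tau_le {g : SL2C} {r : ℝ} : ‖tau g‖ ≤ r ↔ ‖g 0 0 - g 1 1‖ ≤ r ∧ ‖g 0 1‖ ≤ r ∧ ‖g 1 0‖ ≤ r := by
  simp [tau, Prod.norm_def]

lemma tau_lt {g : SL2C} {r : ℝ} : ‖tau g‖ < r ↔ ‖g 0 0 - g 1 1‖ < r ∧ ‖g 0 1‖ < r ∧ ‖g 1 0‖ < r := by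
  simp [tau, Prod.norm_def]

lemma tau_eq_zero {g : SL2C} (h : tau g = 0) : g = 1 ∨ g = -1 := by
  simp only [tau, Prod.mk_eq_zero] at h
  obtain ⟨h0, h1, h2⟩ := h
  have hd := SL_det g
  have e : g 1 1 = g 0 0 := (sub_eq_zero.1 h0).symm
  rw [e, h1, zero_mul, sub_zero] at hd
  rcases mul_self_eq_one_iff.1 hd with h3 | h3
  · left; apply SL_ext <;> simp [*]
  · right; apply SL_ext <;> simp [*, neg_ap]

lemma tau_neg (g : SL2C) : ‖tau (-g)‖ = ‖tau g‖ := by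
  have : tau (-g) = - tau g := by
    simp only [tau, neg_ap, Prod.neg_mk]; ring_nf
  rw [this, norm_neg]

lemma bnd2 {p q r s : ℂ} {α β : ℝ} (h1 : ‖p‖ ≤ α) (h2 : ‖q‖ ≤ β) (h3 : ‖r‖ ≤ α) (h4 : ‖s‖ ≤ β) :
    ‖p * q + r * s‖ ≤ 2 * α * β := by
  have hα : 0 ≤ α := (norm_nonneg _).trans h1
  calc ‖p * q + r * s‖ ≤ ‖p‖ * ‖q‖ + ‖r‖ * ‖s‖ := by
        refine (norm_add_le _ _).trans ?_; rw [norm_mul, norm_mul]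
    _ ≤ α * β + α * β := by gcongr
    _ = _ := by ring

lemma bnd2' {p q r s : ℂ} {α β : ℝ} (h1 : ‖p‖ ≤ α) (h2 : ‖q‖ ≤ β) (h3 : ‖r‖ ≤ α) (h4 : ‖s‖ ≤ β) :
    ‖p * q - r * s‖ ≤ 2 * α * β := by
  rw [sub_eq_add_neg, ← neg_mul]
  exact bnd2 h1 h2 (by rwa [norm_neg]) h4

lemma entry_bound_gen {g : SL2C} {r : ℝ} (h : ‖tau g‖ ≤ r) (i j : Fin 2) : ‖g i j‖ ≤ 3 * r + 2 := by
  obtain ⟨h0, h1, h2⟩ := tau_le.1 h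
  have hr : 0 ≤ r := (norm_nonneg _).trans h0
  have hd := SL_det g
  have e : (g 0 0 + g 1 1) ^ 2 = (g 0 0 - g 1 1) ^ 2 + 4 + 4 * (g 0 1 * g 1 0) := by
    linear_combination 4 * hd
  have hn : ‖g 0 0 + g 1 1‖ ^ 2 ≤ r ^ 2 + 4 + 4 * (r * r) := by
    rw [← norm_pow, e]
    refine (norm_add_le _ _).trans ?_
    gcongr
    · refine (norm_add_le _ _).trans ?_
      rw [norm_pow]
      gcongr
      simp
    · rw [norm_mul, norm_mul]
      gcongr
      simp
  have hs : ‖g 0 0 + g 1 1‖ ≤ 3 * r + 2 := by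
    apply le_of_sq_le_sq _ (by positivity)
    nlinarith
  have ha : ‖g 0 0‖ ≤ 3 * r + 2 := by
    have e : g 0 0 = ((g 0 0 + g 1 1) + (g 0 0 - g 1 1)) / 2 := by ring
    rw [e, norm_div]
    have := norm_add_le (g 0 0 + g 1 1) (g 0 0 - g 1 1)
    simp only [Complex.norm_ofNat]
    linarith
  have hb : ‖g 1 1‖ ≤ 3 * r + 2 := by
    have e : g 1 1 = ((g 0 0 + g 1 1) - (g 0 0 - g 1 1)) / 2 := by ring
    rw [e, norm_div]
    have := norm_sub_le (g 0 0 + g 1 1) (g 0 0 - g 1 1)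
    simp only [Complex.norm_ofNat]
    linarith
  fin_cases i <;> fin_cases j <;> simp <;> linarith

lemma entry_bound {g : SL2C} (h : ‖tau g‖ ≤ 1 / 100) (i j : Fin 2) : ‖g i j‖ ≤ 11 / 10 := by
  obtain ⟨h0, h1, h2⟩ := tau_le.1 h
  have hd := SL_det g
  have e : (g 0 0 + g 1 1) ^ 2 = (g 0 0 - g 1 1) ^ 2 + 4 + 4 * (g 0 1 * g 1 0) := by
    linear_combination 4 * hd
  have hn : ‖g 0 0 + g 1 1‖ ^ 2 ≤ (1/100) ^ 2 + 4 + 4 * ((1/100) * (1/100)) := by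
    rw [← norm_pow, e]
    refine (norm_add_le _ _).trans ?_
    gcongr
    · refine (norm_add_le _ _).trans ?_
      rw [norm_pow]
      gcongr
      simp
    · rw [norm_mul, norm_mul]
      gcongr
      simp
  have hs : ‖g 0 0 + g 1 1‖ ≤ 21/10 := by
    apply le_of_sq_le_sq _ (by positivity)
    nlinarith
  have ha : ‖g 0 0‖ ≤ 11/10 := by
    have e : g 0 0 = ((g 0 0 + g 1 1) + (g 0 0 - g 1 1)) / 2 := by ring
    rw [e, norm_div]
    have := norm_add_le (g 0 0 + g 1 1) (g 0 0 - g 1 1)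
    simp only [Complex.norm_ofNat]
    linarith
  have hb : ‖g 1 1‖ ≤ 11/10 := by
    have e : g 1 1 = ((g 0 0 + g 1 1) - (g 0 0 - g 1 1)) / 2 := by ring
    rw [e, norm_div]
    have := norm_sub_le (g 0 0 + g 1 1) (g 0 0 - g 1 1)
    simp only [Complex.norm_ofNat]
    linarith
  fin_cases i <;> fin_cases j <;> simp <;> linarith

lemma zass {A B : SL2C} (hA : ‖tau A‖ ≤ e0) (hB : ‖tau B‖ ≤ e0) :
    A * B * (A⁻¹ * B⁻¹) ≠ -1 ∧ ‖tau (A * B * (A⁻¹ * B⁻¹))‖ ≤ 20 * ‖tau A‖ * ‖tau B‖ := by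
  obtain ⟨a0, a1, a2⟩ := tau_le.1 (le_refl ‖tau A‖)
  obtain ⟨b0, b1, b2⟩ := tau_le.1 (le_refl ‖tau B‖)
  set α := ‖tau A‖
  set β := ‖tau B‖
  have hα : 0 ≤ α := norm_nonneg _
  have hβ : 0 ≤ β := norm_nonneg _
  have eA := entry_bound hA
  have eB := entry_bound hB
  set M := A⁻¹ * B⁻¹ with hM
  have hQ : B * A * M = 1 := by rw [hM]; group
  have Q00 := congrArg (fun g : SL2C => g 0 0) hQ
  have Q01 := congrArg (fun g : SL2C => g 0 1) hQ
  have Q10 := congrArg (fun g : SL2C => g 1 0) hQ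
  have Q11 := congrArg (fun g : SL2C => g 1 1) hQ
  simp only [mul00 (B * A), mul01 (B * A), mul10 (B * A), mul11 (B * A),
    one00, one01, one10, one11] at Q00 Q01 Q10 Q11
  have Z00 : ‖(A * B) 0 0 - (B * A) 0 0‖ ≤ 2 * α * β := by
    have : (A * B) 0 0 - (B * A) 0 0 = A 0 1 * B 1 0 - A 1 0 * B 0 1 := by simp; ring
    rw [this]; exact bnd2' a1 b2 a2 b1
  have Z11 : ‖(A * B) 1 1 - (B * A) 1 1‖ ≤ 2 * α * β := by
    have : (A * B) 1 1 - (B * A) 1 1 = A 1 0 * B 0 1 - A 0 1 * B 1 0 := by simp; ring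
    rw [this]; exact bnd2' a2 b1 a1 b2
  have Z01 : ‖(A * B) 0 1 - (B * A) 0 1‖ ≤ 2 * α * β := by
    have : (A * B) 0 1 - (B * A) 0 1 = (A 0 0 - A 1 1) * B 0 1 - A 0 1 * (B 0 0 - B 1 1) := by
      simp; ring
    rw [this]; exact bnd2' a0 b1 a1 b0
  have Z10 : ‖(A * B) 1 0 - (B * A) 1 0‖ ≤ 2 * α * β := by
    have : (A * B) 1 0 - (B * A) 1 0 = A 1 0 * (B 0 0 - B 1 1) - (A 0 0 - A 1 1) * B 1 0 := by
      simp; ring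
    rw [this]; exact bnd2' a2 b0 a0 b2
  have M00 : ‖M 0 0‖ ≤ 242/100 := by
    rw [hM]; simp only [mul00, inv00, inv01, inv10]
    refine (bnd2 (eA 1 1) (eB 1 1) ?_ ?_).trans (by norm_num)
    · simpa using eA 0 1
    · simpa using eB 1 0
  have M01 : ‖M 0 1‖ ≤ 242/100 := by
    rw [hM]; simp only [mul01, inv00, inv01, inv10, inv11]
    refine (bnd2 (eA 1 1) (s := B 0 0) (by simpa using eB 0 1) ?_ (eB 0 0)).trans (by norm_num)
    simpa using eA 0 1
  have M10 : ‖M 1 0‖ ≤ 242/100 := by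
    rw [hM]; simp only [mul10, inv00, inv01, inv10, inv11]
    refine (bnd2 (by simpa using eA 1 0) (eB 1 1) (eA 0 0) ?_).trans (by norm_num)
    simpa using eB 1 0
  have M11 : ‖M 1 1‖ ≤ 242/100 := by
    rw [hM]; simp only [mul11, inv00, inv01, inv10, inv11]
    refine (bnd2 (by simpa using eA 1 0) (by simpa using eB 0 1) (eA 0 0) (eB 0 0)).trans (by norm_num)
  have C00 : ‖(A * B * M) 0 0 - 1‖ ≤ 2 * (2 * α * β) * (242/100) := by
    have : (A * B * M) 0 0 - 1 = ((A * B) 0 0 - (B * A) 0 0) * M 0 0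
        + ((A * B) 0 1 - (B * A) 0 1) * M 1 0 := by
      rw [mul00 (A * B)]; linear_combination Q00
    rw [this]; exact bnd2 Z00 M00 Z01 M10
  have C11 : ‖(A * B * M) 1 1 - 1‖ ≤ 2 * (2 * α * β) * (242/100) := by
    have : (A * B * M) 1 1 - 1 = ((A * B) 1 0 - (B * A) 1 0) * M 0 1
        + ((A * B) 1 1 - (B * A) 1 1) * M 1 1 := by
      rw [mul11 (A * B)]; linear_combination Q11
    rw [this]; exact bnd2 Z10 M01 Z11 M11
  have C01 : ‖(A * B * M) 0 1‖ ≤ 2 * (2 * α * β) * (242/100) := by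
    have : (A * B * M) 0 1 = ((A * B) 0 0 - (B * A) 0 0) * M 0 1
        + ((A * B) 0 1 - (B * A) 0 1) * M 1 1 := by
      rw [mul01 (A * B)]; linear_combination Q01
    rw [this]; exact bnd2 Z00 M01 Z01 M11
  have C10 : ‖(A * B * M) 1 0‖ ≤ 2 * (2 * α * β) * (242/100) := by
    have : (A * B * M) 1 0 = ((A * B) 1 0 - (B * A) 1 0) * M 0 0
        + ((A * B) 1 1 - (B * A) 1 1) * M 1 0 := by
      rw [mul10 (A * B)]; linear_combination Q10
    rw [this]; exact bnd2 Z10 M00 Z11 M10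
  have hab : 0 ≤ α * β := mul_nonneg hα hβ
  constructor
  · intro e
    rw [e] at C00
    simp only [neg_ap, one00] at C00
    have : ‖(-1 - 1 : ℂ)‖ = 2 := by norm_num
    rw [this] at C00
    unfold e0 at hA hB
    nlinarith
  · rw [tau_le]
    refine ⟨?_, by linarith, by linarith⟩
    have : (A * B * M) 0 0 - (A * B * M) 1 1 = ((A * B * M) 0 0 - 1) - ((A * B * M) 1 1 - 1) := by ring
    rw [this]
    refine (norm_sub_le _ _).trans ?_
    linarith

lemma comm_par {A B : SL2C} (h : A * B = B * A) (hA : tau A ≠ 0) : ∃ m : ℂ, tau B = m • tau A := by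
  have Q00 := congrArg (fun g : SL2C => g 0 0) h
  have Q01 := congrArg (fun g : SL2C => g 0 1) h
  have Q10 := congrArg (fun g : SL2C => g 1 0) h
  simp only [mul00, mul01, mul10] at Q00 Q01 Q10
  have e1 : A 0 1 * B 1 0 = A 1 0 * B 0 1 := by linear_combination Q00
  have e2 : (A 0 0 - A 1 1) * B 0 1 = A 0 1 * (B 0 0 - B 1 1) := by linear_combination Q01
  have e3 : A 1 0 * (B 0 0 - B 1 1) = (A 0 0 - A 1 1) * B 1 0 := by linear_combination Q10
  have hor : A 0 0 - A 1 1 ≠ 0 ∨ A 0 1 ≠ 0 ∨ A 1 0 ≠ 0 := by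
    by_contra hcon
    push Not at hcon
    exact hA (by simp [tau, hcon])
  rcases hor with h0 | h0 | h0
  · refine ⟨(B 0 0 - B 1 1) / (A 0 0 - A 1 1), ?_⟩
    simp only [tau, Prod.smul_mk, smul_eq_mul, Prod.mk.injEq, div_mul_eq_mul_div, eq_div_iff h0]
    exact ⟨trivial, by linear_combination e2, by linear_combination -e3⟩
  · refine ⟨B 0 1 / A 0 1, ?_⟩
    simp only [tau, Prod.smul_mk, smul_eq_mul, Prod.mk.injEq, div_mul_eq_mul_div, eq_div_iff h0]
    exact ⟨by linear_combination -e2, trivial, by linear_combination e1⟩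
  · refine ⟨B 1 0 / A 1 0, ?_⟩
    simp only [tau, Prod.smul_mk, smul_eq_mul, Prod.mk.injEq, div_mul_eq_mul_div, eq_div_iff h0]
    exact ⟨by linear_combination e3, by linear_combination -e1, trivial⟩

section nondiv
variable {X : Type*} [TopologicalSpace X] {ax : X → SL2C → X}

lemma fin_stab (h : RA ax) (x : X) (R : ℝ) : {g | ax x g = x ∧ ‖tau g‖ ≤ R}.Finite := by
  by_contra hinf
  have hC : IsCompact {g : SL2C | ∀ i j, ‖g i j‖ ≤ 3 * R + 2} := by
    have h1 : IsCompact (Set.univ.pi fun _ : Fin 2 => Set.univ.pi fun _ : Fin 2 =>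
        Metric.closedBall (0:ℂ) (3 * R + 2)) :=
      isCompact_univ_pi fun _ => isCompact_univ_pi fun _ => isCompact_closedBall _ _
    have h2 := SL_isClosedEmbedding.isCompact_preimage h1
    have e : {g : SL2C | ∀ i j, ‖g i j‖ ≤ 3 * R + 2} = (Subtype.val : SL2C → Matrix (Fin 2) (Fin 2) ℂ) ⁻¹'
      (Set.univ.pi fun _ : Fin 2 => Set.univ.pi fun _ : Fin 2 =>
        Metric.closedBall (0:ℂ) (3 * R + 2)) := by
      apply Set.ext
      intro g
      constructor
      · intro hg i _ j _
        exact mem_closedBall_zero_iff.2 (hg i j)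
      · intro hg i j
        exact mem_closedBall_zero_iff.1 (hg i trivial j trivial)
    rw [e]; exact h2
  have hinf' : Infinite {g | ax x g = x ∧ ‖tau g‖ ≤ R} := Set.infinite_coe_iff.2 hinf
  have inv_st : ∀ g, ax x g = x → ax x g⁻¹ = x := by
    intro g hg
    conv_lhs => rw [← hg]
    rw [h.mul_inv]
  let f := Infinite.natEmbedding {g | ax x g = x ∧ ‖tau g‖ ≤ R}
  obtain ⟨y, -, φ, hφ, hy⟩ := hC.tendsto_subseq (x := fun n => (f n).1)
    (fun n i j => entry_bound_gen (f n).2.2 i j)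
  obtain ⟨W, hW, hW'⟩ := h.disc x
  have hy2 := hy.comp (tendsto_add_atTop_nat 1)
  have hlim := hy2.mul hy.inv
  rw [mul_inv_cancel] at hlim
  obtain ⟨N, hN⟩ := eventually_atTop.1 (hlim hW)
  have h1 := hW' _ (hN N le_rfl) (by
    have e1 := (f (φ (N + 1))).2.1
    have e2 := (f (φ N)).2.1
    have e3 : ax x (f (φ N)).1⁻¹ = x := inv_st _ e2
    simp only [Function.comp]
    rw [h.mul, e1, e3])
  simp only [Function.comp] at h1
  rw [mul_inv_eq_one] at h1
  have h2 := hφ.injective (f.injective (Subtype.ext h1))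
  omega

/-- `PSL`-nontrivial small stabilizer elements are parallel -/
lemma small_par (h : RA ax) {x : X} {A B : SL2C} (hA : ax x A = x) (hA1 : tau A ≠ 0)
    (hAs : ‖tau A‖ < e0) (hB : ax x B = x) (hB1 : tau B ≠ 0) (hBs : ‖tau B‖ < e0) :
    ∃ m : ℂ, tau B = m • tau A := by
  have inv_st : ∀ g, ax x g = x → ax x g⁻¹ = x := by
    intro g hg
    conv_lhs => rw [← hg]
    rw [h.mul_inv]
  have hfin : {g | (ax x g = x ∧ ‖tau g‖ ≤ e0) ∧ tau g ≠ 0}.Finite :=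
    (fin_stab h x e0).subset fun g hg => hg.1
  obtain ⟨C, ⟨⟨hC, hCs⟩, hC1⟩, hmin⟩ := Set.exists_min_image _ (fun g => ‖tau g‖) hfin
    ⟨A, ⟨hA, hAs.le⟩, hA1⟩
  have key : ∀ B, ax x B = x → ‖tau B‖ ≤ e0 → ∃ m : ℂ, tau B = m • tau C := by
    intro B hB hBs
    apply comm_par _ hC1
    obtain ⟨z1, z2⟩ := zass hCs hBs
    have hst : ax x (C * B * (C⁻¹ * B⁻¹)) = x := by
      rw [h.mul, h.mul, h.mul, hC, hB, inv_st C hC, inv_st B hB]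
    have hCpos : 0 < ‖tau C‖ := norm_pos_iff.2 hC1
    have hsm : ‖tau (C * B * (C⁻¹ * B⁻¹))‖ < ‖tau C‖ := by
      refine z2.trans_lt ?_
      unfold e0 at hBs
      nlinarith
    have hz : tau (C * B * (C⁻¹ * B⁻¹)) = 0 := by
      by_contra hz
      exact absurd hsm (not_lt.2 (hmin _ ⟨⟨hst, hsm.le.trans hCs⟩, hz⟩))
    have h1 := (tau_eq_zero hz).resolve_right z1
    have e : C * B = (C * B * (C⁻¹ * B⁻¹)) * (B * C) := by group
    rw [e, h1, one_mul]
  obtain ⟨m, hm⟩ := key A hA hAs.le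
  obtain ⟨n, hn⟩ := key B hB hBs.le
  have hm0 : m ≠ 0 := by
    rintro rfl; rw [zero_smul] at hm; exact hA1 hm
  exact ⟨n / m, by rw [hn, hm, smul_smul, div_mul_cancel₀ _ hm0]⟩

/-- the conjugation by `u_s` on `tau` -/
def Lop (s : ℝ) (v : ℂ × ℂ × ℂ) : ℂ × ℂ × ℂ :=
  (v.1 - 2 * s * v.2.2, v.2.1 + s * v.1 - s ^ 2 * v.2.2, v.2.2)

lemma Lop_smul (s : ℝ) (m : ℂ) (v : ℂ × ℂ × ℂ) : Lop s (m • v) = m • Lop s v := by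
  simp only [Lop, Prod.smul_fst, Prod.smul_snd, Prod.smul_mk, smul_eq_mul]
  ring_nf

lemma Lop_cont (v : ℂ × ℂ × ℂ) : Continuous fun s => Lop s v := by
  unfold Lop; fun_prop

lemma tau_conj (s : ℝ) (g : SL2C) : tau ((uMat s)⁻¹ * g * uMat s) = Lop s (tau g) := by
  simp only [tau, Lop]
  simp
  constructor <;> ring

lemma Lop_eq_zero {s : ℝ} {v : ℂ × ℂ × ℂ} (h : Lop s v = 0) : v = 0 := by
  simp only [Lop, Prod.mk_eq_zero] at h
  obtain ⟨h1, h2, h3⟩ := h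
  rw [h3] at h1 h2
  have h4 : v.1 = 0 := by simpa using h1
  rw [h4] at h2
  have h5 : v.2.1 = 0 := by simpa using h2
  exact Prod.ext h4 (Prod.ext h5 h3)

lemma thin_iff (h : RA ax) {x : X} {s : ℝ} (hs : ax x (uMat s) ∉ Kset ax e0) :
    ∃ g, ax x g = x ∧ tau g ≠ 0 ∧ ‖Lop s (tau g)‖ < e0 := by
  simp only [Kset, Set.mem_ofPred_eq, not_forall, not_le] at hs
  obtain ⟨k, hk, hk1, hk2, hk3⟩ := hs
  refine ⟨uMat s * k * (uMat s)⁻¹, ?_, ?_, ?_⟩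
  · rw [h.mul, h.mul, hk, h.mul_inv]
  · intro h0
    have h1 := tau_conj s (uMat s * k * (uMat s)⁻¹)
    have e : (uMat s)⁻¹ * (uMat s * k * (uMat s)⁻¹) * uMat s = k := by group
    rw [e, h0] at h1
    have : tau k = 0 := by rw [h1]; simp [Lop]
    rcases tau_eq_zero this with h2 | h2 <;> contradiction
  · rw [← tau_conj]
    have e : (uMat s)⁻¹ * (uMat s * k * (uMat s)⁻¹) * uMat s = k := by group
    rwa [e]

lemma par_at (h : RA ax) {x : X} {s : ℝ} {A B : SL2C} (hA : ax x A = x) (hA1 : tau A ≠ 0)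
    (hAs : ‖Lop s (tau A)‖ < e0) (hB : ax x B = x) (hB1 : tau B ≠ 0)
    (hBs : ‖Lop s (tau B)‖ < e0) : ∃ m : ℂ, tau B = m • tau A := by
  have hst : ∀ g, ax x g = x → ax (ax x (uMat s)) ((uMat s)⁻¹ * g * uMat s) = ax x (uMat s) := by
    intro g hg
    rw [h.mul, h.mul, h.mul_inv, hg]
  obtain ⟨m, hm⟩ := small_par h (hst A hA) (by rw [tau_conj]; exact fun e => hA1 (Lop_eq_zero e))
    (by rwa [tau_conj]) (hst B hB) (by rw [tau_conj]; exact fun e => hB1 (Lop_eq_zero e))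
    (by rwa [tau_conj])
  refine ⟨m, ?_⟩
  rw [tau_conj, tau_conj, ← Lop_smul] at hm
  have hsub : Lop s (tau B - m • tau A) = 0 := by
    have : Lop s (tau B - m • tau A) = Lop s (tau B) - Lop s (m • tau A) := by
      simp only [Lop, Prod.fst_sub, Prod.snd_sub, Prod.mk_sub_mk]
      ring_nf
    rw [this, hm, sub_self]
  exact sub_eq_zero.1 (Lop_eq_zero hsub)

lemma lemF (h : RA ax) {x : X} (hN : ∀ ζ : ℂ, ζ ≠ 0 → ax x (uMat ζ) = x → e0 ≤ ‖ζ‖) :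
    ∃ l0 > 0, ∀ l ≥ l0, ∃ s ∈ Set.Icc l (2 * l), ax x (uMat (s : ℝ)) ∈ Kset ax e0 := by
  have he : (0:ℝ) < e0 := by norm_num [e0]
  have hfin := fin_stab h x (35 * e0)
  have hev : ∀ᶠ l : ℝ in atTop, ∀ g ∈ {g | ax x g = x ∧ ‖tau g‖ ≤ 35 * e0},
      (‖g 1 0‖ ≤ 8 * e0 / l ^ 2 → g 1 0 = 0) ∧ (‖g 0 0 - g 1 1‖ ≤ 26 * e0 / l → g 0 0 - g 1 1 = 0) := by
    rw [eventually_all_finite hfin]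
    intro g _
    have t1 : Tendsto (fun l : ℝ => 8 * e0 / l ^ 2) atTop (nhds 0) :=
      tendsto_const_nhds.div_atTop (tendsto_pow_atTop (by norm_num))
    have t2 : Tendsto (fun l : ℝ => 26 * e0 / l) atTop (nhds 0) :=
      tendsto_const_nhds.div_atTop tendsto_id
    refine Eventually.and ?_ ?_
    · by_cases h0 : g 1 0 = 0
      · simp [h0]
      · filter_upwards [t1.eventually (gt_mem_nhds (norm_pos_iff.2 h0))] with l hl hl'
        exact absurd hl (not_lt.2 hl')
    · by_cases h0 : g 0 0 - g 1 1 = 0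
      · simp [h0]
      · filter_upwards [t2.eventually (gt_mem_nhds (norm_pos_iff.2 h0))] with l hl hl'
        exact absurd hl (not_lt.2 hl')
  obtain ⟨l1, hl1⟩ := eventually_atTop.1 hev
  refine ⟨max l1 1, by positivity, fun l hl => ?_⟩
  have hl1' : 1 ≤ l := le_of_max_le_right hl
  by_contra hcon
  push Not at hcon
  have hthin : ∀ s ∈ Set.Icc l (2 * l), ∃ g, ax x g = x ∧ tau g ≠ 0 ∧ ‖Lop s (tau g)‖ < e0 :=
    fun s hs => thin_iff h (hcon s hs)
  choose! γ hγ1 hγ2 hγ3 using hthin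
  have hpar : ∀ s ∈ Set.Icc l (2 * l), ∀ s' ∈ Set.Icc l (2 * l), ∃ m : ℂ, tau (γ s') = m • tau (γ s) := by
    intro s hs s' hs'
    refine isPreconnected_Icc.induction₂ (fun s s' => ∃ m : ℂ, tau (γ s') = m • tau (γ s))
      ?_ ?_ ?_ hs hs'
    · intro t ht
      have : ∀ᶠ t' in nhds t, ‖Lop t' (tau (γ t))‖ < e0 :=
        ((Lop_cont _).norm.tendsto t).eventually (gt_mem_nhds (hγ3 t ht))
      filter_upwards [mem_nhdsWithin_of_mem_nhds this, self_mem_nhdsWithin] with t' h1 h2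
      exact par_at h (hγ1 t ht) (hγ2 t ht) h1 (hγ1 t' h2) (hγ2 t' h2) (hγ3 t' h2)
    · rintro a b c ha hb hc ⟨m, hm⟩ ⟨n, hn⟩
      exact ⟨n * m, by rw [hn, hm, smul_smul]⟩
    · rintro a b ha hb ⟨m, hm⟩
      have hm0 : m ≠ 0 := by
        rintro rfl; rw [zero_smul] at hm; exact hγ2 b hb hm
      exact ⟨m⁻¹, by rw [hm, smul_smul, inv_mul_cancel₀ hm0, one_smul]⟩
  have hl0 : 0 < l := by linarith
  have hll : l ∈ Set.Icc l (2 * l) := ⟨le_rfl, by linarith⟩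
  -- minimal element on the line
  have hfin2 : {g | (ax x g = x ∧ ‖tau g‖ ≤ ‖tau (γ l)‖) ∧ tau g ≠ 0 ∧ ∃ m : ℂ, tau g = m • tau (γ l)}.Finite :=
    (fin_stab h x _).subset fun g hg => hg.1
  obtain ⟨g, ⟨⟨hg, hgl⟩, hg0, m0, hm0⟩, hmin⟩ := Set.exists_min_image _ (fun g => ‖tau g‖) hfin2
    ⟨γ l, ⟨hγ1 l hll, le_rfl⟩, hγ2 l hll, 1, by simp⟩
  have hm00 : m0 ≠ 0 := by
    rintro rfl; rw [zero_smul] at hm0; exact hg0 hm0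
  have hall : ∀ s ∈ Set.Icc l (2 * l), ‖Lop s (tau g)‖ < e0 := by
    intro s hs
    obtain ⟨m, hm⟩ := hpar l hll s hs
    have hle : ‖tau g‖ ≤ ‖tau (γ s)‖ := by
      by_cases hc : ‖tau (γ s)‖ ≤ ‖tau (γ l)‖
      · exact hmin _ ⟨⟨hγ1 s hs, hc⟩, hγ2 s hs, m, hm⟩
      · exact hgl.trans (not_le.1 hc).le
    have hm' : tau (γ s) = (m / m0) • tau g := by
      rw [hm0, hm, smul_smul, div_mul_cancel₀ _ hm00]
    have hmm : 1 ≤ ‖m / m0‖ := by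
      rw [hm', norm_smul] at hle
      have := norm_pos_iff.2 hg0
      exact (le_mul_iff_one_le_left this).1 hle
    have h1 := hγ3 s hs
    rw [hm', Lop_smul, norm_smul] at h1
    nlinarith [norm_nonneg (Lop s (tau g))]
  have e1 := hall l hll
  have e2 := hall (3/2 * l) ⟨by linarith, by linarith⟩
  have e3 := hall (2 * l) ⟨by linarith, le_rfl⟩
  simp only [Lop, tau, Prod.norm_def, max_lt_iff] at e1 e2 e3
  obtain ⟨-, q1, -⟩ := e1
  obtain ⟨-, q2, -⟩ := e2
  obtain ⟨-, q3, -⟩ := e3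
  push_cast at q1 q2 q3
  set xx := g 0 0 - g 1 1 with hxx
  set bb := g 0 1
  set cc := g 1 0
  have nl : ‖(l:ℂ)‖ = l := by rw [Complex.norm_real, Real.norm_of_nonneg hl0.le]
  have hc : ‖cc‖ * l ^ 2 ≤ 8 * e0 := by
    have e : cc * l ^ 2 = -2 * ((bb + l * xx - l ^ 2 * cc)
        + (bb + 2 * l * xx - (2 * l) ^ 2 * cc)) + 4 * (bb + 3/2 * l * xx - (3/2 * l) ^ 2 * cc) := by ring
    calc ‖cc‖ * l ^ 2 = ‖cc * l ^ 2‖ := by rw [norm_mul, norm_pow, nl]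
      _ ≤ 2 * (e0 + e0) + 4 * e0 := by
        rw [e]
        refine (norm_add_le _ _).trans ?_
        rw [norm_mul, norm_mul]
        have n2 : ‖(-2:ℂ)‖ = 2 := by simp
        have n4 : ‖(4:ℂ)‖ = 4 := by simp
        rw [n2, n4]
        gcongr
        exact (norm_add_le _ _).trans (add_le_add q1.le q3.le)
      _ = _ := by ring
  have hx : ‖xx‖ * l ≤ 26 * e0 := by
    have e : xx * l = (bb + 2 * l * xx - (2 * l) ^ 2 * cc) - (bb + l * xx - l ^ 2 * cc)
      + 3 * (cc * l ^ 2) := by ring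
    calc ‖xx‖ * l = ‖xx * l‖ := by rw [norm_mul, nl]
      _ ≤ (e0 + e0) + 3 * (8 * e0) := by
        rw [e]
        refine (norm_add_le _ _).trans ?_
        gcongr
        · exact (norm_sub_le _ _).trans (add_le_add q3.le q1.le)
        · rw [norm_mul, norm_mul, norm_pow, nl]
          have : ‖(3:ℂ)‖ = 3 := by simp
          rw [this]; gcongr
      _ = _ := by ring
  have hb : ‖bb‖ ≤ 35 * e0 := by
    have e : bb = (bb + l * xx - l ^ 2 * cc) - xx * l + cc * l ^ 2 := by ring
    calc ‖bb‖ ≤ e0 + 26 * e0 + 8 * e0 := by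
          rw [e]
          refine (norm_add_le _ _).trans ?_
          gcongr
          · refine (norm_sub_le _ _).trans ?_
            gcongr
            rwa [norm_mul, nl]
          · rwa [norm_mul, norm_pow, nl]
      _ = _ := by ring
  have hcle : ‖cc‖ ≤ 8 * e0 / l ^ 2 := by rwa [le_div_iff₀ (by positivity)]
  have hxle : ‖xx‖ ≤ 26 * e0 / l := by rwa [le_div_iff₀ (by positivity)]
  have htau : ‖tau g‖ ≤ 35 * e0 := by
    rw [tau_le]
    refine ⟨?_, hb, ?_⟩
    · refine hxle.trans ((div_le_self (by positivity) hl1').trans (by linarith))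
    · refine hcle.trans ((div_le_self (by positivity) (one_le_pow₀ hl1')).trans (by linarith))
  obtain ⟨f1, f2⟩ := hl1 l (le_of_max_le_left hl) g ⟨hg, htau⟩
  have hc0 : cc = 0 := f1 hcle
  have hx0 : xx = 0 := f2 hxle
  rw [hx0, hc0] at q1
  have hbs : ‖bb‖ < e0 := by simpa using q1
  have hb0 : bb ≠ 0 := by
    intro hb0
    apply hg0
    show (xx, bb, cc) = 0
    rw [hx0, hb0, hc0]; rfl
  have hd := SL_det g
  have ead : g 1 1 = g 0 0 := by linear_combination -hx0 + hxx - hxx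
  have hc0' : g 1 0 = 0 := hc0
  rw [ead, hc0', mul_zero, sub_zero] at hd
  rcases mul_self_eq_one_iff.1 hd with h3 | h3
  · have e : g = uMat bb := by
      apply SL_ext <;> simp [h3, ead, hc0']
      rfl
    exact absurd hbs (not_lt.2 (hN bb hb0 (by rw [← e, hg])))
  · have e : -g = uMat (-bb) := by
      apply SL_ext <;> simp [h3, ead, hc0', neg_ap]
      rfl
    have := hN (-bb) (neg_ne_zero.2 hb0) (by rw [← e, h.neg, hg])
    rw [norm_neg] at this
    exact absurd hbs (not_lt.2 this)

end nondiv


/-! ### Minimal sets -/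

section minsets
open MeasureTheory

lemma u_comm (z w : ℂ) : uMat z * uMat w = uMat w * uMat z := by
  rw [← u_add, ← u_add, add_comm]

lemma u_dMat (z : ℂ) (δ : ℝ) (hδ : 0 < δ) : dMat δ hδ * uMat z = uMat (z * δ ^ 2) * dMat δ hδ := by
  have h0 : (δ : ℂ) ≠ 0 := by exact_mod_cast hδ.ne'
  apply SL_ext <;> simp [dMat]
  field_simp

lemma dMat_mul_inv (δ : ℝ) (hδ : 0 < δ) : dMat δ hδ * dMat δ⁻¹ (inv_pos.2 hδ) = 1 := by
  have h0 : (δ : ℂ) ≠ 0 := by exact_mod_cast hδ.ne'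
  apply SL_ext <;> simp [dMat, h0]

/-- `tri` as product -/
lemma tri_eq (α : ℝ) (hα : 0 < α) (z : ℂ) : tri α hα.ne' z = uMat (z * α) * dMat α hα := by
  have h0 : (α : ℂ) ≠ 0 := by exact_mod_cast hα.ne'
  apply SL_ext <;> simp [dMat, h0]

def UInv {X : Type*} (ax : X → SL2C → X) (F : Set X) : Prop :=
  ∀ x ∈ F, ∀ t : ℝ, ax x (uMat t) ∈ F

def DInv {X : Type*} (ax : X → SL2C → X) (F : Set X) : Prop :=
  ∀ x ∈ F, ∀ δ (hδ : 0 < δ), ax x (dMat δ hδ) ∈ F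

def Ncond {X : Type*} (ax : X → SL2C → X) (x : X) : Prop :=
  ∀ ζ : ℂ, ζ ≠ 0 → ax x (uMat ζ) = x → e0 ≤ ‖ζ‖

lemma e0_pos : 0 < e0 := by norm_num [e0]

section topo
variable {X : Type*} [TopologicalSpace X] {ax : X → SL2C → X}

lemma DInv.cancel (h : RA ax) {F : Set X} (hD : DInv ax F) {x : X} {δ : ℝ} {hδ : 0 < δ}
    (hx : ax x (dMat δ hδ) ∈ F) : x ∈ F := by
  have := hD _ hx δ⁻¹ (inv_pos.2 hδ)
  rwa [← h.mul, dMat_mul_inv, h.one] at this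

lemma N_size (h : RA ax) (x : X) : ∃ r > 0, ∀ δ (hδ : 0 < δ), ∀ ζ : ℂ, ζ ≠ 0 →
    ax (ax x (dMat δ hδ)) (uMat ζ) = ax x (dMat δ hδ) → r / δ ^ 2 ≤ ‖ζ‖ := by
  obtain ⟨W, hW, hW'⟩ := h.disc x
  obtain ⟨ε, hε, hεW⟩ := dist1_basis hW
  refine ⟨ε, hε, fun δ hδ ζ hζ hst => ?_⟩
  rw [← h.mul, u_dMat, h.mul] at hst
  have h1 : ax x (uMat (ζ * δ ^ 2)) = x := by
    have := congrArg (fun y => ax y (dMat δ hδ)⁻¹) hst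
    simpa only [h.mul_inv] using this
  by_contra hlt
  push Not at hlt
  rw [lt_div_iff₀ (by positivity)] at hlt
  have h2 := hW' _ (hεW _ (by
    simp only [dist1, u00, u01, u10, u11]
    simpa [abs_of_pos hδ] using hlt)) h1
  have h3 := congrArg (fun g : SL2C => g 0 1) h2
  have h0 : (δ : ℂ) ≠ 0 := by exact_mod_cast hδ.ne'
  simp [hζ, h0] at h3

lemma Ncond_small (h : RA ax) (x : X) : ∃ δ0 > 0, ∀ δ (hδ : 0 < δ), δ < δ0 →
    Ncond ax (ax x (dMat δ hδ)) := by
  obtain ⟨r, hr, hr'⟩ := N_size h x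
  refine ⟨min 1 (r / e0), lt_min one_pos (div_pos hr e0_pos), fun δ hδ hlt ζ hζ hst => ?_⟩
  refine le_trans ?_ (hr' δ hδ ζ hζ hst)
  rw [le_div_iff₀ (by positivity)]
  have h1 : δ < 1 := hlt.trans_le (min_le_left _ _)
  have h2 : δ < r / e0 := hlt.trans_le (min_le_right _ _)
  rw [lt_div_iff₀ e0_pos] at h2
  nlinarith [e0_pos, mul_pos hδ e0_pos]

lemma Ncond_of_K {x : X} (hx : x ∈ Kset ax e0) : Ncond ax x := by
  intro ζ hζ hst
  have := hx _ hst (fun e => hζ (by simpa using congrArg (fun g : SL2C => g 0 1) e))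
    (fun e => hζ (by simpa [neg_ap] using congrArg (fun g : SL2C => g 0 1) e))
  simpa [tau, Prod.norm_def] using this

lemma meets_K (h : RA ax) {F : Set X} (hU : UInv ax F) (hD : DInv ax F) (hne : F.Nonempty) :
    ∃ y ∈ F, y ∈ Kset ax e0 := by
  obtain ⟨x, hx⟩ := hne
  obtain ⟨δ0, h0, h1⟩ := Ncond_small h x
  obtain ⟨l0, hl0, hl⟩ := lemF h (h1 (δ0 / 2) (by positivity) (by linarith))
  obtain ⟨s, -, hs⟩ := hl l0 le_rfl
  exact ⟨_, hU _ (hD _ hx _ _) s, hs⟩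

structure Kmin (ax : X → SL2C → X) (Y : Set X) : Prop where
  cl : IsClosed Y
  ui : UInv ax Y
  ne : ∃ y ∈ Y, y ∈ Kset ax e0
  min : ∀ y ∈ Y, y ∈ Kset ax e0 → ∀ C, IsClosed C → UInv ax C → y ∈ C → Y ⊆ C

lemma Kmin.push (h : RA ax) {Y F : Set X} (hY : Kmin ax Y) (hF : IsClosed F) (hU : UInv ax F)
    {z : X} (hz : z ∈ Y) (hzK : z ∈ Kset ax e0) {α : ℝ} (hα : 0 < α) {w : ℂ}
    (hzg : ax z (tri α hα.ne' w) ∈ F) : ∀ y ∈ Y, ax y (tri α hα.ne' w) ∈ F := by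
  refine hY.min z hz hzK {y | ax y (tri α hα.ne' w) ∈ F} (hF.preimage (h.contr _)) ?_ hzg
  intro y hy t
  have h0 : (α : ℂ) ≠ 0 := by exact_mod_cast hα.ne'
  have := hU _ hy (t / α ^ 2)
  rw [Set.mem_ofPred_eq, ← h.mul]
  rw [← h.mul] at this
  convert this using 2
  apply SL_ext <;> simp
  field_simp
  ring

lemma Kmin.push_v (h : RA ax) {Y F : Set X} (hY : Kmin ax Y) (hF : IsClosed F) (hU : UInv ax F)
    {z : X} (hz : z ∈ Y) (hzK : z ∈ Kset ax e0) {w : ℂ}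
    (hzg : ax z (uMat w) ∈ F) : ∀ y ∈ Y, ax y (uMat w) ∈ F := by
  have e : uMat w = tri 1 one_pos.ne' w := by apply SL_ext <;> simp
  rw [e] at hzg ⊢
  exact hY.push h hF hU hz hzK one_pos hzg

end topo

variable {X : Type*} [TopologicalSpace X] [MeasurableSpace X] [BorelSpace X]
  [SecondCountableTopology X] {ax : X → SL2C → X} {μ : Measure X}

lemma K_compact (h : RA ax) (hμ : RM ax μ) : IsCompact (Kset ax e0) := by
  apply IsCountablyCompact.isCompact
  apply IsSeqCompact.isCountablyCompact
  intro f hf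
  exact lemE h hμ e0_pos hf

/-- existence of minimal sets -/
lemma exists_Kmin (h : RA ax) (hμ : RM ax μ) {F : Set X} (hF : IsClosed F) (hU : UInv ax F)
    (hK : ∃ y ∈ F, y ∈ Kset ax e0) : ∃ Y, Y ⊆ F ∧ Kmin ax Y := by
  have hKc := K_compact h hμ
  obtain ⟨Y, hYF, hmin⟩ := zorn_superset_nonempty
    {C : Set X | IsClosed C ∧ UInv ax C ∧ ∃ y ∈ C, y ∈ Kset ax e0} (by
    intro c hc hchain hcne
    refine ⟨⋂₀ c, ⟨isClosed_sInter fun s hs => (hc hs).1, ?_, ?_⟩, fun s hs => Set.sInter_subset_of_mem hs⟩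
    · intro x hx t s hs
      exact (hc hs).2.1 x (hx s hs) t
    · by_contra hcon
      push Not at hcon
      haveI : Nonempty c := hcne.to_subtype
      obtain ⟨i, hi⟩ := hKc.elim_directed_cover (fun s : c => (s.1)ᶜ) (fun s => (hc s.2).1.isOpen_compl)
        (by
          intro x hx
          by_contra hcc
          simp only [Set.mem_iUnion, Set.mem_compl_iff, not_exists, not_not] at hcc
          exact hcon x (fun s hs => hcc ⟨s, hs⟩) hx)
        (by
          intro s t
          rcases hchain.total s.2 t.2 with h1 | h1
          · exact ⟨s, subset_rfl, Set.compl_subset_compl.2 h1⟩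
          · exact ⟨t, Set.compl_subset_compl.2 h1, subset_rfl⟩)
      obtain ⟨y, hy, hyK⟩ := (hc i.2).2.2
      exact hi hyK hy) F ⟨hF, hU, hK⟩
  refine ⟨Y, hYF, hmin.prop.1, hmin.prop.2.1, hmin.prop.2.2, ?_⟩
  intro y hy hyK C hC hCU hyC
  have h1 : Y ∩ C ∈ {C : Set X | IsClosed C ∧ UInv ax C ∧ ∃ y ∈ C, y ∈ Kset ax e0} :=
    ⟨hmin.prop.1.inter hC, fun x hx t => ⟨hmin.prop.2.1 x hx.1 t, hCU x hx.2 t⟩, y, ⟨hy, hyC⟩, hyK⟩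
  exact (hmin.le_of_le h1 Set.inter_subset_left).trans Set.inter_subset_right

/-- interval finish -/
lemma lemG0 (h : RA ax) (hμ : RM ax μ) {F : Set X} (hF : IsClosed F) (hU : UInv ax F)
    (hD : DInv ax F) {z : X} {p q : ℝ} (hpq : p < q)
    (hz : ∀ σ ∈ Set.Icc p q, ax z (uMat (σ * Complex.I)) ∈ F) : F = Set.univ := by
  set m := (p + q) / 2 with hm
  obtain ⟨δ0, h0, h1⟩ := Ncond_small h (ax z (uMat (m * Complex.I)))
  let δ : ℕ → ℝ := fun n => δ0 / (n + 2)
  have hδ : ∀ n, 0 < δ n := fun n => by positivity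
  have hδ0 : ∀ n, δ n < δ0 := fun n => by
    simp only [δ]; rw [div_lt_iff₀ (by positivity)]; nlinarith [(Nat.cast_nonneg n : (0:ℝ) ≤ n)]
  have hδt : Tendsto δ atTop (nhds 0) :=
    tendsto_const_nhds.div_atTop (tendsto_atTop_add_const_right _ _ tendsto_natCast_atTop_atTop)
  have hs : ∀ n, ∃ s : ℝ, ax (ax (ax z (uMat (m * Complex.I))) (dMat (δ n) (hδ n))) (uMat s) ∈ Kset ax e0 := by
    intro n
    obtain ⟨l0, hl0, hl⟩ := lemF h (h1 (δ n) (hδ n) (hδ0 n))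
    obtain ⟨s, -, hs⟩ := hl l0 le_rfl
    exact ⟨s, hs⟩
  choose s hs using hs
  obtain ⟨w, -, φ, hφ, hw⟩ := lemE h hμ e0_pos hs
  refine lemD h hμ hF hD (z := w) fun ζ => ?_
  refine hF.mem_of_tendsto (((h.contr (uMat ζ)).tendsto w).comp hw) ?_
  have hev : ∀ᶠ n in atTop, |ζ.im * δ n ^ 2| < (q - p) / 2 := by
    have : Tendsto (fun n => |ζ.im * δ n ^ 2|) atTop (nhds 0) := by
      have := ((hδt.pow 2).const_mul ζ.im).abs
      simpa using this
    exact this.eventually (gt_mem_nhds (by linarith))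
  filter_upwards [hφ.tendsto_atTop.eventually hev] with n hn
  simp only [Function.comp]
  have key : ax (ax (ax (ax z (uMat (m * Complex.I))) (dMat (δ (φ n)) (hδ _))) (uMat (s (φ n)))) (uMat ζ)
      = ax (ax (ax z (uMat ((m + ζ.im * δ (φ n) ^ 2 : ℝ) * Complex.I)))
        (uMat (((ζ.re + s (φ n)) * δ (φ n) ^ 2 : ℝ)))) (dMat (δ (φ n)) (hδ _)) := by
    simp only [← h.mul]
    congr 1
    rw [mul_assoc (uMat _ * _), ← u_add, mul_assoc, u_dMat, ← mul_assoc, ← u_add, ← u_add]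
    congr 2
    apply Complex.ext <;> simp [← Complex.ofReal_pow, -mul_eq_mul_right_iff]
    ring
  rw [key]
  refine hD _ (hU _ (hz _ ?_) _) _ _
  rw [abs_lt] at hn
  constructor <;> rw [hm] <;> linarith [hn.1, hn.2]

end minsets

/-! ### Polynomial lemmas -/

section poly
variable {E : Type*} [NormedAddCommGroup E] [NormedSpace ℝ E] [ProperSpace E]

lemma poly_lim {p q : ℕ → E} (hp : Tendsto p atTop (nhds 0)) (hq : Tendsto q atTop (nhds 0))
    (hne : ∀ n, p n ≠ 0 ∨ q n ≠ 0) {η : ℝ} (hη : 0 < η) :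
    ∃ (φ : ℕ → ℕ) (R : ℕ → ℝ) (p' q' : E), Tendsto φ atTop atTop ∧ Tendsto R atTop atTop ∧
      Tendsto (fun k => R k • p (φ k)) atTop (nhds p') ∧
      Tendsto (fun k => R k ^ 2 • q (φ k)) atTop (nhds q') ∧ (p' ≠ 0 ∨ q' ≠ 0) ∧
      ‖p'‖ ≤ η ∧ ‖q'‖ ≤ η := by
  let f : E × E → ℝ := fun x => max (‖x.1‖ / η) (Real.sqrt (‖x.2‖ / η))
  have hfc : Continuous f := by fun_prop
  have hf0 : f 0 = 0 := by simp [f]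
  have hfpos : ∀ n, 0 < f (p n, q n) := by
    intro n
    rcases hne n with h | h
    · exact lt_max_of_lt_left (div_pos (norm_pos_iff.2 h) hη)
    · exact lt_max_of_lt_right (Real.sqrt_pos.2 (div_pos (norm_pos_iff.2 h) hη))
  have hft : Tendsto (fun n => f (p n, q n)) atTop (nhds 0) := by
    have := (hfc.tendsto 0).comp (hp.prodMk_nhds hq)
    rwa [hf0] at this
  let R : ℕ → ℝ := fun n => (f (p n, q n))⁻¹
  have hRpos : ∀ n, 0 < R n := fun n => inv_pos.2 (hfpos n)
  have hR : Tendsto R atTop atTop := by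
    apply Tendsto.inv_tendsto_nhdsGT_zero
    rw [tendsto_nhdsWithin_iff]
    exact ⟨hft, Eventually.of_forall hfpos⟩
  have hscale : ∀ n, f (R n • p n, R n ^ 2 • q n) = 1 := by
    intro n
    have e : f (R n • p n, R n ^ 2 • q n) = R n * f (p n, q n) := by
      simp only [f, norm_smul, norm_pow, Real.norm_of_nonneg (hRpos n).le]
      rw [mul_max_of_nonneg _ _ (hRpos n).le, mul_div_assoc, mul_div_assoc,
        Real.sqrt_mul (by positivity), Real.sqrt_sq (hRpos n).le]
    rw [e]
    exact inv_mul_cancel₀ (hfpos n).ne'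
  have hb : ∀ x : E × E, f x = 1 → ‖x.1‖ ≤ η ∧ ‖x.2‖ ≤ η := by
    intro x hx
    have h1 : ‖x.1‖ / η ≤ 1 := hx ▸ le_max_left _ _
    have h2 : Real.sqrt (‖x.2‖ / η) ≤ 1 := hx ▸ le_max_right _ _
    rw [div_le_one hη] at h1
    rw [Real.sqrt_le_one, div_le_one hη] at h2
    exact ⟨h1, h2⟩
  obtain ⟨x, -, φ, hφ, hx⟩ := (isCompact_closedBall (0 : E × E) η).tendsto_subseq
    (x := fun n => (R n • p n, R n ^ 2 • q n)) (fun n => by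
      rw [mem_closedBall_zero_iff, Prod.norm_def]
      exact max_le (hb _ (hscale n)).1 (hb _ (hscale n)).2)
  have hfx : f x = 1 := by
    have h1 := (hfc.tendsto x).comp hx
    have h2 : (f ∘ (fun n => (R n • p n, R n ^ 2 • q n)) ∘ φ) = fun _ => (1:ℝ) :=
      funext fun n => hscale _
    rw [h2] at h1
    exact tendsto_nhds_unique h1 tendsto_const_nhds
  refine ⟨φ, R ∘ φ, x.1, x.2, hφ.tendsto_atTop, hR.comp hφ.tendsto_atTop,
    (continuous_fst.tendsto x).comp hx, (continuous_snd.tendsto x).comp hx, ?_, (hb x hfx).1, (hb x hfx).2⟩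
  by_contra hcon
  push Not at hcon
  have : f x = 0 := by simp [f, hcon]
  linarith

lemma poly_thick {p q : ℕ → E} (hp : Tendsto p atTop (nhds 0)) (hq : Tendsto q atTop (nhds 0))
    (hne : ∀ n, p n ≠ 0 ∨ q n ≠ 0) {η : ℝ} (hη : 0 < η) {T : Set ℝ} {l0 : ℝ}
    (hT : ∀ l ≥ l0, ∃ s ∈ Set.Icc l (2 * l), s ∈ T) :
    ∃ (φ : ℕ → ℕ) (s : ℕ → ℝ) (p' q' : E), Tendsto φ atTop atTop ∧ Tendsto s atTop atTop ∧
      (∀ k, s k ∈ T) ∧ Tendsto (fun k => s k • p (φ k)) atTop (nhds p') ∧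
      Tendsto (fun k => s k ^ 2 • q (φ k)) atTop (nhds q') ∧ p' + q' ≠ 0 ∧
      ‖p'‖ ≤ η ∧ ‖q'‖ ≤ η := by
  obtain ⟨φ, R, p', q', hφ, hR, h1, h2, hpq, n1, n2⟩ := poly_lim hp hq hne (η := η / 64) (by positivity)
  have hgen : ∀ c : ℝ, 1 ≤ c → c ≤ 4 → ∃ (θ : ℝ) (ψ : ℕ → ℕ) (s : ℕ → ℝ), θ ∈ Set.Icc c (2 * c) ∧
      Tendsto ψ atTop atTop ∧ Tendsto s atTop atTop ∧ (∀ k, s k ∈ T) ∧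
      Tendsto (fun k => s k • p (ψ k)) atTop (nhds (θ • p')) ∧
      Tendsto (fun k => s k ^ 2 • q (ψ k)) atTop (nhds (θ ^ 2 • q')) := by
    intro c hc1 hc4
    obtain ⟨N, hN⟩ := eventually_atTop.1 (hR.eventually_ge_atTop (max l0 1))
    have hR1 : ∀ k, 1 ≤ R (k + N) := fun k => (le_max_right _ _).trans (hN _ (by omega))
    have hex : ∀ k, ∃ s ∈ Set.Icc (c * R (k + N)) (2 * (c * R (k + N))), s ∈ T := fun k =>
      hT _ (((le_max_left _ _).trans (hN (k + N) (by omega))).trans (by nlinarith [hR1 k]))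
    choose s hs hsT using hex
    have hth : ∀ k, s k / R (k + N) ∈ Set.Icc c (2 * c) := by
      intro k
      have := hR1 k
      constructor
      · rw [le_div_iff₀ (by linarith)]; exact (hs k).1
      · rw [div_le_iff₀ (by linarith)]; linarith [(hs k).2]
    obtain ⟨θ, hθ, χ, hχ, hχt⟩ := isCompact_Icc.tendsto_subseq hth
    have hsh : Tendsto (fun k => χ k + N) atTop atTop :=
      (tendsto_add_atTop_nat N).comp hχ.tendsto_atTop
    refine ⟨θ, fun k => φ (χ k + N), s ∘ χ, hθ, hφ.comp hsh, ?_, fun k => hsT _, ?_, ?_⟩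
    · refine tendsto_atTop_mono (fun k => ?_) (hR.comp hsh)
      have := (hs (χ k)).1
      have := hR1 (χ k)
      simp only [Function.comp]
      nlinarith
    · have := hχt.smul (h1.comp hsh)
      refine this.congr fun k => ?_
      have := hR1 (χ k)
      simp only [Function.comp, smul_smul]
      rw [div_mul_cancel₀ _ (by linarith)]
    · have := (hχt.pow 2).smul (h2.comp hsh)
      refine this.congr fun k => ?_
      have := hR1 (χ k)
      simp only [Function.comp, smul_smul]
      rw [← mul_pow, div_mul_cancel₀ _ (by linarith)]
  obtain ⟨θ, ψ, s, hθ, a1, a2, a3, a4, a5⟩ := hgen 1 le_rfl (by norm_num)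
  obtain ⟨θ', ψ', s', hθ', b1, b2, b3, b4, b5⟩ := hgen 4 (by norm_num) le_rfl
  have nb : ∀ t : ℝ, 0 ≤ t → t ≤ 8 → ‖t • p'‖ ≤ η ∧ ‖t ^ 2 • q'‖ ≤ η := by
    intro t ht ht8
    rw [norm_smul, norm_smul, norm_pow, Real.norm_of_nonneg ht]
    constructor
    · nlinarith [norm_nonneg p']
    · have : t ^ 2 ≤ 64 := by nlinarith
      nlinarith [norm_nonneg q']
  by_cases hc : θ • p' + θ ^ 2 • q' ≠ 0
  · exact ⟨ψ, s, _, _, a1, a2, a3, a4, a5, hc, nb θ (by linarith [hθ.1]) (by linarith [hθ.2])⟩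
  by_cases hc' : θ' • p' + θ' ^ 2 • q' ≠ 0
  · exact ⟨ψ', s', _, _, b1, b2, b3, b4, b5, hc', nb θ' (by linarith [hθ'.1]) (by linarith [hθ'.2])⟩
  exfalso
  push Not at hc hc'
  have c1 : p' + θ • q' = 0 := by
    have : θ • (p' + θ • q') = 0 := by rw [smul_add, smul_smul, ← sq]; exact hc
    exact (smul_eq_zero.1 this).resolve_left (by linarith [hθ.1])
  have c2 : p' + θ' • q' = 0 := by
    have : θ' • (p' + θ' • q') = 0 := by rw [smul_add, smul_smul, ← sq]; exact hc'
    exact (smul_eq_zero.1 this).resolve_left (by linarith [hθ'.1])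
  have c3 : (θ' - θ) • q' = 0 := by
    rw [sub_smul]
    have := c2.trans c1.symm
    rw [add_right_inj] at this
    rw [this, sub_self]
  have c4 : q' = 0 := (smul_eq_zero.1 c3).resolve_left (by linarith [hθ'.1, hθ.2])
  rw [c4, smul_zero, add_zero] at c1
  rcases hpq with h | h
  · exact h c1
  · exact h c4

end poly

/-- first component of the divergence -/
def P1 (g : SL2C) : ℝ := -(g 0 1 * star (g 1 0) + g 1 1 * star (g 0 0)).im
/-- second component -/
def P2 (g : SL2C) : ℝ := (g 1 1 * star (g 1 0)).im

lemma continuous_P1 : Continuous P1 := by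
  have h00 := continuous_entry 0 0
  have h01 := continuous_entry 0 1
  have h10 := continuous_entry 1 0
  have h11 := continuous_entry 1 1
  unfold P1; fun_prop

lemma continuous_P2 : Continuous P2 := by
  have h10 := continuous_entry 1 0
  have h11 := continuous_entry 1 1
  unfold P2; fun_prop

lemma P1_one : P1 1 = 0 := by simp [P1]
lemma P2_one : P2 1 = 0 := by simp [P2]

/-- `κ` is real -/
lemma kappa_real {g : ℕ → SL2C} {s : ℕ → ℝ} (hg : Tendsto g atTop (nhds 1)) (hs : Tendsto s atTop atTop)
    {κ : ℂ} {q : ℝ} (h1 : Tendsto (fun n => (s n : ℂ) * g n 1 0) atTop (nhds κ))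
    (h2 : Tendsto (fun n => s n ^ 2 * P2 (g n)) atTop (nhds q)) : κ.im = 0 := by
  have hd : Tendsto (fun n => g n 1 1) atTop (nhds 1) := by simpa using (tendsto_SL.1 hg).2.2.2
  have h3 : Tendsto (fun n => (g n 1 1 * star ((s n : ℂ) * g n 1 0)).im) atTop (nhds (1 * star κ).im) :=
    (Complex.continuous_im.tendsto _).comp (hd.mul (h1.star))
  have h4 : Tendsto (fun n => (s n)⁻¹ * (s n ^ 2 * P2 (g n))) atTop (nhds (0 * q)) :=
    (tendsto_inv_atTop_zero.comp hs).mul h2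
  have h5 : Tendsto (fun n => (g n 1 1 * star ((s n : ℂ) * g n 1 0)).im) atTop (nhds (0 * q)) := by
    refine h4.congr' ?_
    filter_upwards [hs.eventually_gt_atTop 0] with n hn
    have : (s n)⁻¹ * (s n ^ 2 * P2 (g n)) = s n * P2 (g n) := by
      field_simp
    rw [this, P2]
    simp
    ring
  have := tendsto_nhds_unique h3 h5
  simpa using this

lemma conj_lim {g : ℕ → SL2C} {s : ℕ → ℝ} (hg : Tendsto g atTop (nhds 1))
    {κ ψ : ℝ} (h1 : Tendsto (fun n => (s n : ℂ) * g n 1 0) atTop (nhds κ))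
    (h2 : Tendsto (fun n => s n * P1 (g n) + s n ^ 2 * P2 (g n)) atTop (nhds ψ)) (hκ : 0 < 1 - κ) :
    ∃ t : ℕ → ℝ, Tendsto (fun n => (uMat (s n))⁻¹ * g n * uMat (t n)) atTop
      (nhds (tri (1 - κ) hκ.ne' ((ψ / (1 - κ) : ℝ) * Complex.I))) := by
  obtain ⟨ha, hb, hc, hd⟩ := tendsto_SL.1 hg
  rw [one00] at ha; rw [one01] at hb; rw [one10] at hc; rw [one11] at hd
  let A : ℕ → ℂ := fun n => g n 0 0 - s n * g n 1 0
  let B : ℕ → ℂ := fun n => g n 0 1 - s n * g n 1 1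
  have hA : Tendsto A atTop (nhds ((1 - κ : ℝ) : ℂ)) := by
    have := ha.sub h1
    simpa using this
  have hκ0 : ((1 - κ : ℝ) : ℂ) ≠ 0 := by exact_mod_cast hκ.ne'
  have hIm : ∀ n, (B n * star (A n)).im =
      (g n 0 1 * star (g n 0 0)).im + (s n * P1 (g n) + s n ^ 2 * P2 (g n)) := by
    intro n
    simp only [A, B, P1, P2]
    simp
    ring
  have hImt : Tendsto (fun n => (B n * star (A n)).im) atTop (nhds ψ) := by
    simp only [hIm]
    have : Tendsto (fun n => (g n 0 1 * star (g n 0 0)).im) atTop (nhds (0 * star (1:ℂ)).im) :=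
      (Complex.continuous_im.tendsto _).comp (hb.mul ha.star)
    have := this.add h2
    simpa using this
  let e01 : ℕ → ℂ := fun n => (((B n * star (A n)).im : ℝ) : ℂ) * Complex.I / star (A n)
  have he01 : Tendsto e01 atTop (nhds ((ψ / (1 - κ) : ℝ) * Complex.I)) := by
    have t1 : Tendsto (fun n => (((B n * star (A n)).im : ℝ) : ℂ) * Complex.I) atTop (nhds ((ψ:ℂ) * Complex.I)) :=
      ((Complex.continuous_ofReal.tendsto _).comp hImt).mul_const _
    have t2 := hA.star
    have := t1.div t2 (by simpa using hκ0)
    have e : (ψ : ℂ) * Complex.I / star ((1 - κ : ℝ) : ℂ) = (ψ / (1 - κ) : ℝ) * Complex.I := by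
      have : star ((1 - κ : ℝ) : ℂ) = ((1 - κ : ℝ) : ℂ) := Complex.conj_ofReal _
      rw [this]; push_cast; ring
    rw [e] at this
    exact this
  let t : ℕ → ℝ := fun n => -(B n / A n).re
  have hAne : ∀ᶠ n in atTop, A n ≠ 0 := hA.eventually_ne hκ0
  have hcoef : ∀ᶠ n in atTop, B n + t n * A n = e01 n := by
    filter_upwards [hAne] with n hn
    have hn' : star (A n) ≠ 0 := by simpa using hn
    have e1 : B n = (B n / A n) * A n := by field_simp
    have e2 : (((B n / A n) : ℂ)) = ((B n / A n).re : ℝ) + ((B n / A n).im : ℝ) * Complex.I :=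
      (Complex.re_add_im _).symm
    have e3 : B n * star (A n) = (B n / A n) * (Complex.normSq (A n) : ℝ) := by
      rw [← Complex.mul_conj]; field_simp; rfl
    have e4 : (B n * star (A n)).im = (B n / A n).im * Complex.normSq (A n) := by
      rw [e3]; simp only [Complex.mul_im, Complex.ofReal_re, Complex.ofReal_im]; ring
    simp only [e01]
    rw [e4]
    push_cast
    rw [← Complex.mul_conj]
    rw [eq_div_iff hn']
    have e5 : B n + t n * A n = ((B n / A n).im : ℝ) * Complex.I * A n := by
      simp only [t]
      push_cast
      linear_combination e1 + A n * e2
    rw [e5]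
    simp only [← starRingEnd_apply]
    ring
  refine ⟨t, tendsto_SL.2 ⟨?_, ?_, ?_, ?_⟩⟩
  · refine (hA.congr fun n => ?_)
    simp [A]; ring
  · rw [t01]
    refine he01.congr' ?_
    filter_upwards [hcoef] with n hn
    rw [← hn]
    simp [A, B]; ring
  · rw [t10]
    refine (hc.congr fun n => ?_)
    simp
  · rw [t11]
    have h3 : Tendsto (fun n => (1 + g n 1 0 * e01 n) / A n) atTop
        (nhds ((1 + 0 * ((ψ / (1 - κ) : ℝ) * Complex.I)) / ((1 - κ : ℝ) : ℂ))) :=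
      ((hc.mul he01).const_add 1).div hA hκ0
    have e : (1 + 0 * ((ψ / (1 - κ) : ℝ) * Complex.I)) / ((1 - κ : ℝ) : ℂ) = ((1 - κ : ℝ) : ℂ)⁻¹ := by
      rw [zero_mul, add_zero, one_div]
    rw [e] at h3
    refine h3.congr' ?_
    filter_upwards [hcoef, hAne] with n hn hn2
    rw [← hn, div_eq_iff hn2]
    have := SL_det (g n)
    simp [A, B]
    linear_combination (-1:ℂ) * this


/-! ### Nonperiodic minimal sets -/

lemma aff_up {S : Set ℝ} (hS : IsClosed S) {f : ℝ → ℝ} {τ L ε : ℝ} (hτ : τ ∈ S)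
    (hf : ∀ σ ∈ S, τ ≤ σ → σ ≤ τ + L → f σ ∈ S ∧ σ < f σ ∧ f σ < σ + ε) {x : ℝ}
    (hx : x ∈ Set.Icc τ (τ + L)) : ∃ y ∈ S, |y - x| < ε := by
  by_contra hcon
  push Not at hcon
  have hε : 0 < ε := by
    have := hf τ hτ le_rfl (hx.1.trans hx.2)
    linarith
  have hτx : τ ≤ x := hx.1
  have hmax := (isCompact_Icc (a := τ) (b := x)).inter_left hS
  obtain ⟨m, ⟨hmS, hm1, hm2⟩, hmm⟩ := hmax.exists_isMaxOn ⟨τ, hτ, le_rfl, hτx⟩ continuousOn_id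
  obtain ⟨f1, f2, f3⟩ := hf m hmS hm1 (hm2.trans hx.2)
  have hle : f m ≤ x := by
    by_contra hlt
    push Not at hlt
    have := hcon _ f1
    rw [abs_of_pos (by linarith)] at this
    linarith
  have := hmm ⟨f1, hm1.trans f2.le, hle⟩
  simp only [Set.mem_ofPred_eq, id] at this
  linarith

lemma aff_down {S : Set ℝ} (hS : IsClosed S) {f : ℝ → ℝ} {τ L ε : ℝ} (hτ : τ ∈ S)
    (hf : ∀ σ ∈ S, τ - L ≤ σ → σ ≤ τ → f σ ∈ S ∧ f σ < σ ∧ σ - ε < f σ) {x : ℝ}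
    (hx : x ∈ Set.Icc (τ - L) τ) : ∃ y ∈ S, |y - x| < ε := by
  obtain ⟨y, hy, hyx⟩ := aff_up (S := (fun x => -x) ⁻¹' S) (hS.preimage continuous_neg)
    (f := fun x => -f (-x)) (τ := -τ) (L := L) (ε := ε) (x := -x) (by simpa using hτ) (by
      intro σ hσ h1 h2
      obtain ⟨a, b, c⟩ := hf (-σ) hσ (by linarith) (by linarith)
      refine ⟨by simpa using a, by linarith, by linarith⟩) ⟨by linarith [hx.2], by linarith [hx.1]⟩
  refine ⟨-y, hy, ?_⟩
  have e : -y - x = -(y - -x) := by ring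
  rw [e, abs_neg]
  exact hyx

/-- closed sets of reals invariant under small affine maps -/
lemma aff_interval {S : Set ℝ} (hS : IsClosed S) (h0 : (0:ℝ) ∈ S) {σ0 : ℝ} (hσ : σ0 ≠ 0) (h1 : σ0 ∈ S)
    (hf : ∀ η > 0, ∃ A ψ : ℝ, (A ≠ 1 ∨ ψ ≠ 0) ∧ |A - 1| ≤ η ∧ |ψ| ≤ η ∧ ∀ σ ∈ S, ψ + A * σ ∈ S) :
    ∃ p q, p < q ∧ Set.Icc p q ⊆ S := by
  by_contra hcon
  push Not at hcon
  have hgap : ∀ p q, p < q → ∃ x ∈ Set.Icc p q, ∃ ε > 0, ∀ y ∈ S, ε ≤ |y - x| := by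
    intro p q hpq
    obtain ⟨x, hx, hxS⟩ := Set.not_subset.1 (hcon p q hpq)
    obtain ⟨ε, hε, hb⟩ := Metric.isOpen_iff.1 hS.isOpen_compl x hxS
    refine ⟨x, hx, ε, hε, fun y hy => ?_⟩
    by_contra hlt
    push Not at hlt
    exact hb (by rwa [Metric.mem_ball, Real.dist_eq]) hy
  set L := |σ0| / 3 with hL
  have hLpos : 0 < L := by have := abs_pos.2 hσ; positivity
  have hc : ∀ τ, ∃ ε > 0, (∃ x ∈ Set.Icc τ (τ + L), ∀ y ∈ S, ε ≤ |y - x|) ∧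
      (∃ x ∈ Set.Icc (τ - L) τ, ∀ y ∈ S, ε ≤ |y - x|) := by
    intro τ
    obtain ⟨x, hx, ε, hε, hh⟩ := hgap τ (τ + L) (by linarith)
    obtain ⟨x', hx', ε', hε', hh'⟩ := hgap (τ - L) τ (by linarith)
    exact ⟨min ε ε', lt_min hε hε', ⟨x, hx, fun y hy => (min_le_left _ _).trans (hh y hy)⟩,
      ⟨x', hx', fun y hy => (min_le_right _ _).trans (hh' y hy)⟩⟩
  obtain ⟨ε1, hε1, hu1, hd1⟩ := hc 0
  obtain ⟨ε2, hε2, hu2, hd2⟩ := hc σ0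
  set ε := min ε1 ε2 with hε
  have hεpos : 0 < ε := lt_min hε1 hε2
  set M := 1 + 2 * |σ0| with hM
  have hMpos : 0 < M := by positivity
  obtain ⟨A, ψ, hne, hA, hψ, hinv⟩ := hf (ε / (2 * M)) (by positivity)
  have hstep : ∀ σ, |σ| ≤ 2 * |σ0| → |ψ + (A - 1) * σ| < ε := by
    intro σ hs
    calc |ψ + (A - 1) * σ| ≤ |ψ| + |A - 1| * |σ| := by
          rw [← abs_mul]; exact abs_add_le _ _
      _ ≤ ε / (2 * M) + ε / (2 * M) * (2 * |σ0|) := by gcongr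
      _ = ε / 2 := by rw [hM]; field_simp
      _ < ε := by linarith
  have hτ : ∃ τ, (τ = 0 ∨ τ = σ0) ∧ ∀ σ, |σ - τ| ≤ L → ψ + (A - 1) * σ ≠ 0 := by
    by_contra hcc
    push Not at hcc
    obtain ⟨a, ha, ha'⟩ := hcc 0 (Or.inl rfl)
    obtain ⟨b, hb, hb'⟩ := hcc σ0 (Or.inr rfl)
    have hab : a - b ≠ 0 := by
      intro e
      have : σ0 = (a - 0) - (b - σ0) := by linarith
      have h3 : |σ0| ≤ L + L := by
        conv_lhs => rw [this]
        exact (abs_sub _ _).trans (add_le_add ha hb)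
      rw [hL] at h3
      have := abs_pos.2 hσ
      linarith
    have h3 : (A - 1) * (a - b) = 0 := by linarith
    have h4 : A - 1 = 0 := (mul_eq_zero.1 h3).resolve_right hab
    rw [h4, zero_mul, add_zero] at ha'
    rcases hne with h | h
    · exact h (by linarith)
    · exact h ha'
  obtain ⟨τ, hτ01, hτf⟩ := hτ
  have hτS : τ ∈ S := by rcases hτ01 with rfl | rfl <;> assumption
  have hτu : ∃ x ∈ Set.Icc τ (τ + L), ∀ y ∈ S, ε ≤ |y - x| := by
    rcases hτ01 with e | e <;> rw [e]
    · obtain ⟨x, hx, hh⟩ := hu1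
      exact ⟨x, hx, fun y hy => (min_le_left _ _).trans (hh y hy)⟩
    · obtain ⟨x, hx, hh⟩ := hu2
      exact ⟨x, hx, fun y hy => (min_le_right _ _).trans (hh y hy)⟩
  have hτd : ∃ x ∈ Set.Icc (τ - L) τ, ∀ y ∈ S, ε ≤ |y - x| := by
    rcases hτ01 with e | e <;> rw [e]
    · obtain ⟨x, hx, hh⟩ := hd1
      exact ⟨x, hx, fun y hy => (min_le_left _ _).trans (hh y hy)⟩
    · obtain ⟨x, hx, hh⟩ := hd2
      exact ⟨x, hx, fun y hy => (min_le_right _ _).trans (hh y hy)⟩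
  have hbd : ∀ σ, |σ - τ| ≤ L → |σ| ≤ 2 * |σ0| := by
    intro σ hs
    have h2 : |τ| ≤ |σ0| := by rcases hτ01 with e | e <;> rw [e]; simp
    have h3 : |σ| ≤ |σ - τ| + |τ| := by
      have := abs_add_le (σ - τ) τ
      simpa using this
    have := abs_nonneg σ0
    linarith
  have hivt : ∀ σ, |σ - τ| ≤ L → (0:ℝ) ∉ Set.uIcc (ψ + (A - 1) * τ) (ψ + (A - 1) * σ) := by
    intro σ hs h0
    have hcont : ContinuousOn (fun x : ℝ => ψ + (A - 1) * x) (Set.uIcc τ σ) := by fun_prop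
    obtain ⟨z, hz, hz0⟩ := intermediate_value_uIcc hcont h0
    refine hτf z ?_ hz0
    refine le_trans ?_ hs
    exact Set.abs_sub_left_of_mem_uIcc hz
  rcases lt_or_gt_of_ne (hτf τ (by simp [hLpos.le])) with hneg | hpos
  · obtain ⟨x, hx, hh⟩ := hτd
    obtain ⟨y, hy, hyx⟩ := aff_down hS (f := fun σ => ψ + A * σ) (ε := ε) hτS (by
      intro σ hσS h1 h2
      have hs : |σ - τ| ≤ L := abs_le.2 ⟨by linarith, by linarith⟩
      have h3 : ψ + (A - 1) * σ < 0 := by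
        by_contra h4
        push Not at h4
        exact hivt σ hs (by rw [Set.mem_uIcc]; left; exact ⟨hneg.le, h4⟩)
      have h5 := (abs_lt.1 (hstep σ (hbd σ hs))).1
      exact ⟨hinv σ hσS, by linarith, by linarith⟩) hx
    exact absurd hyx (not_lt.2 (hh y hy))
  · obtain ⟨x, hx, hh⟩ := hτu
    obtain ⟨y, hy, hyx⟩ := aff_up hS (f := fun σ => ψ + A * σ) (ε := ε) hτS (by
      intro σ hσS h1 h2
      have hs : |σ - τ| ≤ L := abs_le.2 ⟨by linarith, by linarith⟩
      have h3 : 0 < ψ + (A - 1) * σ := by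
        by_contra h4
        push Not at h4
        exact hivt σ hs (by rw [Set.mem_uIcc]; right; exact ⟨h4, hpos.le⟩)
      have h5 := (abs_lt.1 (hstep σ (hbd σ hs))).2
      exact ⟨hinv σ hσS, by linarith, by linarith⟩) hx
    exact absurd hyx (not_lt.2 (hh y hy))

section nonper
open MeasureTheory
variable {X : Type*} [TopologicalSpace X] [MeasurableSpace X] [BorelSpace X]
  [SecondCountableTopology X] {ax : X → SL2C → X} {μ : Measure X}

lemma return_seq (h : RA ax) (hμ : RM ax μ) {Y : Set X} (hY : Kmin ax Y) {y0 : X} (hy0 : y0 ∈ Y)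
    (hy0K : y0 ∈ Kset ax e0) (hper : ∀ t : ℝ, t ≠ 0 → ax y0 (uMat t) ≠ y0) :
    ∃ y1 ∈ Y, y1 ∈ Kset ax e0 ∧ ∃ w : ℕ → SL2C, Tendsto w atTop (nhds 1) ∧
      (∀ n, ∀ t : ℝ, w n ≠ uMat t) ∧ ∀ n, ax y1 (w n) ∈ Y := by
  obtain ⟨l0, hl0, hl⟩ := lemF h (Ncond_of_K hy0K)
  have hex : ∀ n : ℕ, ∃ s ∈ Set.Icc (l0 + n) (2 * (l0 + n)), ax y0 (uMat (s : ℝ)) ∈ Kset ax e0 :=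
    fun n => hl _ (by have : (0:ℝ) ≤ n := Nat.cast_nonneg n; linarith)
  choose t ht htK using hex
  have htt : Tendsto t atTop atTop := by
    refine tendsto_atTop_mono (fun n => ?_) tendsto_natCast_atTop_atTop
    linarith [(ht n).1]
  obtain ⟨y1, hy1, φ, hφ, hlim⟩ := lemE h hμ e0_pos htK
  have hy1Y : y1 ∈ Y := hY.cl.mem_of_tendsto hlim (Eventually.of_forall fun n => hY.ui _ hy0 _)
  obtain ⟨k, hk, hk'⟩ := h.lift hlim
  have hfreq : ∃ᶠ n in atTop, ∀ r : ℝ, k n ≠ uMat r := by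
    intro hcon
    simp only [not_forall, not_not] at hcon
    have hre : Tendsto (fun n => (k n 0 1).re) atTop (nhds 0) := by
      have := (Complex.continuous_re.tendsto _).comp (tendsto_SL.1 hk).2.1
      simpa [Function.comp_def] using this
    have hdiv : Tendsto (fun n => t (φ n) - (k n 0 1).re) atTop atTop := by
      have := (htt.comp hφ.tendsto_atTop).atTop_add hre.neg
      simpa [Function.comp_def, sub_eq_add_neg] using this
    obtain ⟨N, hN⟩ := eventually_atTop.1 hcon
    have hy : ∀ n ≥ N, ax y0 (uMat ((t (φ n) - (k n 0 1).re : ℝ))) = y1 := by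
      intro n hn
      obtain ⟨r, hr⟩ := hN n hn
      have e1 : (k n 0 1).re = r := by rw [hr]; simp
      have e2 := hk' n
      simp only [Function.comp] at e2
      rw [e1]
      push_cast
      rw [sub_eq_add_neg, u_add, h.mul, e2, hr, ← u_inv, h.mul_inv]
    obtain ⟨n, hn1, hn2⟩ := ((hdiv.eventually_gt_atTop (t (φ N) - (k N 0 1).re)).and
      (eventually_ge_atTop N)).exists
    have e := (hy n hn2).trans (hy N le_rfl).symm
    refine hper ((t (φ n) - (k n 0 1).re) - (t (φ N) - (k N 0 1).re)) (by linarith) ?_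
    rw [Complex.ofReal_sub, sub_eq_add_neg, u_add, h.mul, e, ← u_inv, h.mul_inv]
  obtain ⟨χ, hχ, hχ'⟩ := extraction_of_frequently_atTop hfreq
  refine ⟨y1, hy1Y, hy1, k ∘ χ, hk.comp hχ.tendsto_atTop, hχ', fun n => ?_⟩
  simp only [Function.comp]
  rw [← hk']
  exact hY.ui _ hy0 _

lemma lemG2 (h : RA ax) (hμ : RM ax μ) {Y : Set X} (hY : Kmin ax Y) {y0 : X} (hy0 : y0 ∈ Y)
    (hy0K : y0 ∈ Kset ax e0) (hper : ∀ t : ℝ, t ≠ 0 → ax y0 (uMat t) ≠ y0) {η : ℝ} (hη : 0 < η)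
    (hη1 : η ≤ 1 / 2) :
    ∃ (α β : ℝ) (hα : 0 < α), (α ≠ 1 ∨ β ≠ 0) ∧ |α - 1| ≤ η ∧ |β| ≤ η ∧
      ∀ y ∈ Y, ax y (tri α hα.ne' (β * Complex.I)) ∈ Y := by
  obtain ⟨y1, hy1, hy1K, w, hw, hwU, hwY⟩ := return_seq h hμ hY hy0 hy0K hper
  by_cases hcase : ∃ n, dist1 (w n) < η ∧ w n 1 0 = 0 ∧ P1 (w n) = 0
  · obtain ⟨n, hn1, hn2, hn3⟩ := hcase
    have hU := hwU n
    have hYn := hwY n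
    have hdet := SL_det (w n)
    generalize hg : w n = g at *
    rw [hn2, mul_zero, sub_zero] at hdet
    have na : ‖g 0 0 - 1‖ < η := by
      refine lt_of_le_of_lt ?_ hn1
      unfold dist1
      have := norm_nonneg (g 0 1)
      have := norm_nonneg (g 1 0)
      have := norm_nonneg (g 1 1 - 1)
      linarith
    have nb : ‖g 0 1‖ < η := by
      refine lt_of_le_of_lt ?_ hn1
      unfold dist1
      have := norm_nonneg (g 0 0 - 1)
      have := norm_nonneg (g 1 0)
      have := norm_nonneg (g 1 1 - 1)
      linarith
    have ha1 : |(g 0 0).re - 1| < η := by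
      refine lt_of_le_of_lt ?_ na
      simpa using Complex.abs_re_le_norm (g 0 0 - 1)
    have hpos : 0 < (g 0 0).re := by have := (abs_lt.1 ha1).1; linarith
    have him : (g 1 1 * star (g 0 0)).im = 0 := by
      simp only [P1, hn2] at hn3
      simp at hn3 ⊢
      linarith
    have e1 : star (g 0 0) = ((g 1 1 * star (g 0 0)).re : ℝ) * g 0 0 := by
      have e2 : ((g 1 1 * star (g 0 0)).re : ℂ) = g 1 1 * star (g 0 0) := by
        apply Complex.ext
        · simp
        · rw [him]; simp
      rw [e2]
      linear_combination -star (g 0 0) * hdet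
    set ρ := (g 1 1 * star (g 0 0)).re
    have e3 := congrArg Complex.re e1
    have e4 := congrArg Complex.im e1
    simp at e3 e4
    have e5 : ρ = 1 := by
      have : (ρ - 1) * (g 0 0).re = 0 := by linarith
      have := (mul_eq_zero.1 this).resolve_right hpos.ne'
      linarith
    have e6 : (g 0 0).im = 0 := by rw [e5] at e4; linarith
    have ea : g 0 0 = ((g 0 0).re : ℝ) := by
      apply Complex.ext
      · simp
      · simp [e6]
    have hne : ((g 0 0).re : ℂ) ≠ 0 := by exact_mod_cast hpos.ne'
    have ed : g 1 1 = ((g 0 0).re : ℂ)⁻¹ := by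
      apply eq_inv_of_mul_eq_one_left
      rw [← ea]
      linear_combination hdet
    refine ⟨(g 0 0).re, (g 0 1).im, hpos, ?_, ha1.le, ?_, ?_⟩
    · by_contra hcc
      push Not at hcc
      refine hU (g 0 1).re ?_
      rw [hcc.1] at ea ed
      apply SL_ext
      · simp [ea]
      · apply Complex.ext <;> simp [hcc.2]
      · simp [hn2]
      · simp [ed]
    · exact (Complex.abs_im_le_norm _).trans nb.le
    · apply hY.push h hY.cl hY.ui hy1 hy1K hpos
      have := hY.ui _ hYn (-(g 0 1).re / (g 0 0).re)
      rw [← h.mul] at this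
      convert this using 2
      apply SL_ext
      · simp [← ea]
      · simp only [t01, mul01, u01, u11]
        rw [ea]
        simp only [Complex.ofReal_re]
        push_cast
        rw [mul_div_cancel₀ _ hne]
        apply Complex.ext <;> simp
      · simp [hn2]
      · simp [hn2, ed]
  · push Not at hcase
    have hev : ∀ᶠ n in atTop, dist1 (w n) < η := by
      have := (continuous_dist1.tendsto 1).comp hw
      rw [dist1_one] at this
      exact this.eventually (gt_mem_nhds hη)
    obtain ⟨N, hN⟩ := eventually_atTop.1 hev
    obtain ⟨v, hv⟩ : ∃ v : ℕ → SL2C, v = fun n => w (n + N) := ⟨_, rfl⟩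
    have hvt : Tendsto v atTop (nhds 1) := by rw [hv]; exact hw.comp (tendsto_add_atTop_nat N)
    have hvY : ∀ n, ax y1 (v n) ∈ Y := by rw [hv]; exact fun n => hwY _
    have hvc : ∀ n, v n 1 0 = 0 → P1 (v n) ≠ 0 := by
      rw [hv]; exact fun n hc => hcase _ (hN _ (by omega)) hc
    have hvct : Tendsto (fun n => v n 1 0) atTop (nhds 0) := by simpa using (tendsto_SL.1 hvt).2.2.1
    have hv1t : Tendsto (fun n => P1 (v n)) atTop (nhds 0) := by
      have := (continuous_P1.tendsto 1).comp hvt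
      rwa [P1_one] at this
    have hv2t : Tendsto (fun n => P2 (v n)) atTop (nhds 0) := by
      have := (continuous_P2.tendsto 1).comp hvt
      rwa [P2_one] at this
    obtain ⟨l0, hl0, hl⟩ := lemF h (Ncond_of_K hy1K)
    obtain ⟨φ, s, p', q', hφ, hs, hsT, hp, hq, hne, n1, n2⟩ := poly_thick
      (p := fun n => ((v n 1 0, P1 (v n)) : ℂ × ℝ)) (q := fun n => ((0, P2 (v n)) : ℂ × ℝ))
      (T := {s : ℝ | ax y1 (uMat s) ∈ Kset ax e0}) (η := η / 4)
      (hvct.prodMk_nhds hv1t) (tendsto_const_nhds.prodMk_nhds hv2t) (by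
        intro n
        left
        intro e
        rw [Prod.mk_eq_zero] at e
        exact hvc n e.1 e.2) (by positivity) hl
    have hp1 : Tendsto (fun k => (s k : ℂ) * v (φ k) 1 0) atTop (nhds p'.1) := by
      have := (continuous_fst.tendsto p').comp hp
      simpa [Function.comp_def] using this
    have hp2 : Tendsto (fun k => s k * P1 (v (φ k))) atTop (nhds p'.2) := by
      have := (continuous_snd.tendsto p').comp hp
      simpa [Function.comp_def] using this
    have hq1 : q'.1 = 0 := by
      have := (continuous_fst.tendsto q').comp hq
      simp only [Function.comp_def, Prod.smul_fst, smul_zero] at this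
      exact tendsto_nhds_unique this tendsto_const_nhds
    have hq2 : Tendsto (fun k => s k ^ 2 * P2 (v (φ k))) atTop (nhds q'.2) := by
      have := (continuous_snd.tendsto q').comp hq
      simpa [Function.comp_def] using this
    have hreal := kappa_real (hvt.comp hφ) hs hp1 hq2
    obtain ⟨κ, hκ⟩ : ∃ κ : ℝ, p'.1 = κ := ⟨p'.1.re, by apply Complex.ext <;> simp [hreal]⟩
    have hκη : |κ| ≤ η / 4 := by
      have := (norm_fst_le p').trans n1
      rwa [hκ, Complex.norm_real, Real.norm_eq_abs] at this
    have hκ1 : 0 < 1 - κ := by have := (abs_le.1 hκη).2; linarith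
    rw [hκ] at hp1
    obtain ⟨t, ht⟩ := conj_lim (hvt.comp hφ) hp1 (hp2.add hq2) hκ1
    obtain ⟨z, hzK, χ, hχ, hz⟩ := lemE h hμ e0_pos hsT
    have hzY : z ∈ Y := hY.cl.mem_of_tendsto hz (Eventually.of_forall fun n => hY.ui _ hy1 _)
    have hlimY := h.tend hz (ht.comp hχ.tendsto_atTop)
    have hmem := hY.cl.mem_of_tendsto hlimY (Eventually.of_forall fun n => by
      simp only [Function.comp]
      rw [h.mul, h.mul, h.mul_inv]
      exact hY.ui _ (hvY _) _)
    refine ⟨1 - κ, (p'.2 + q'.2) / (1 - κ), hκ1, ?_, ?_, ?_, hY.push h hY.cl hY.ui hzY hzK hκ1 hmem⟩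
    · by_contra hcc
      push Not at hcc
      obtain ⟨c1, c2⟩ := hcc
      apply hne
      have c3 : κ = 0 := by linarith
      rw [c1, div_one] at c2
      apply Prod.ext
      · simp [hκ, c3, hq1]
      · simpa using c2
    · have : 1 - κ - 1 = -κ := by ring
      rw [this, abs_neg]; linarith
    · rw [abs_div, abs_of_pos hκ1, div_le_iff₀ hκ1]
      have b1 : |p'.2| ≤ η / 4 := (norm_snd_le p').trans n1
      have b2 : |q'.2| ≤ η / 4 := (norm_snd_le q').trans n2
      have b3 := abs_add_le p'.2 q'.2
      have := (abs_le.1 hκη).2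
      nlinarith

lemma lemG3 (h : RA ax) (hμ : RM ax μ) {F : Set X} (hF : IsClosed F) (hU : UInv ax F)
    (hD : DInv ax F) {Y : Set X} (hY : Kmin ax Y) (hYF : Y ⊆ F) {y0 : X} (hy0 : y0 ∈ Y)
    (hy0K : y0 ∈ Kset ax e0) (hper : ∀ t : ℝ, t ≠ 0 → ax y0 (uMat t) ≠ y0) {σ0 : ℝ} (hσ : σ0 ≠ 0)
    (hYv : ∀ y ∈ Y, ax y (uMat (σ0 * Complex.I)) ∈ F) : F = Set.univ := by
  let S : Set ℝ := {σ | ∀ y ∈ Y, ax y (uMat (σ * Complex.I)) ∈ F}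
  have hS : IsClosed S := by
    have : S = ⋂ y ∈ Y, (fun σ : ℝ => ax y (uMat (σ * Complex.I))) ⁻¹' F := by
      apply Set.ext
      intro σ
      simp only [Set.mem_iInter]
      rfl
    rw [this]
    refine isClosed_biInter fun y _ => hF.preimage ((h.contl y).comp (continuous_u.comp ?_))
    fun_prop
  obtain ⟨p, q, hpq, hI⟩ := aff_interval hS (σ0 := σ0) (by
      intro y hy
      simpa [u_zero, h.one] using hYF hy) hσ hYv (by
    intro η hη
    obtain ⟨α, β, hα, hne, a1, a2, hYY⟩ := lemG2 h hμ hY hy0 hy0K hper (η := min (1/2) (η / 3))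
      (by positivity) (min_le_left _ _)
    have m1 := a1.trans (min_le_left _ _)
    have m2 := a1.trans (min_le_right _ _)
    have m3 := a2.trans (min_le_right _ _)
    have hα2 := abs_le.1 m1
    refine ⟨α ^ 2, α * β, ?_, ?_, ?_, ?_⟩
    · rcases hne with hh | hh
      · left
        intro e
        have : (α - 1) * (α + 1) = 0 := by linarith
        have := (mul_eq_zero.1 this).resolve_right (by linarith)
        exact hh (by linarith)
      · right
        exact mul_ne_zero hα.ne' hh
    · have e : α ^ 2 - 1 = (α - 1) * (α + 1) := by ring
      rw [e, abs_mul]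
      have : |α + 1| ≤ 3 := abs_le.2 ⟨by linarith, by linarith⟩
      nlinarith [abs_nonneg (α - 1), abs_nonneg (α + 1)]
    · rw [abs_mul]
      have : |α| ≤ 3 := abs_le.2 ⟨by linarith, by linarith⟩
      nlinarith [abs_nonneg α, abs_nonneg β]
    · intro σ hσ y hy
      have h1 := hσ _ (hYY y hy)
      apply hD.cancel h (δ := α) (hδ := hα)
      convert h1 using 1
      rw [← h.mul, ← h.mul, tri_eq α hα, mul_assoc, u_dMat, ← mul_assoc, ← u_add]
      congr 3
      push_cast
      ring)
  obtain ⟨z, hz, -⟩ := hY.ne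
  exact lemG0 h hμ hF hU hD hpq (z := z) fun σ hσ => hI hσ z hz

end nonper


/-! ### Periodic points -/

lemma quad_interval {e p q : ℝ} (hne : p ≠ 0 ∨ q ≠ 0) :
    ∃ a b : ℝ, a < b ∧ ∀ σ ∈ Set.Icc a b, ∃ θ ∈ Set.Ioc (0:ℝ) 1, e + p * θ + q * θ ^ 2 = σ := by
  have key : ∀ t1 ∈ Set.Ioc (0:ℝ) 1, ∀ t2 ∈ Set.Ioc (0:ℝ) 1,
      e + p * t1 + q * t1 ^ 2 < e + p * t2 + q * t2 ^ 2 →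
      ∃ a b : ℝ, a < b ∧ ∀ σ ∈ Set.Icc a b, ∃ θ ∈ Set.Ioc (0:ℝ) 1, e + p * θ + q * θ ^ 2 = σ := by
    intro t1 h1 t2 h2 hlt
    refine ⟨_, _, hlt, fun σ hσ => ?_⟩
    have hc : ContinuousOn (fun θ : ℝ => e + p * θ + q * θ ^ 2) (Set.uIcc t1 t2) := by fun_prop
    have h3 := intermediate_value_uIcc hc
    obtain ⟨θ, hθ, hθ'⟩ := h3 (Set.Icc_subset_uIcc hσ)
    refine ⟨θ, ?_, hθ'⟩
    rw [Set.mem_uIcc] at hθ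
    rcases hθ with hh | hh
    · exact ⟨lt_of_lt_of_le h1.1 hh.1, hh.2.trans h2.2⟩
    · exact ⟨lt_of_lt_of_le h2.1 hh.1, hh.2.trans h1.2⟩
  have m1 : (1/4:ℝ) ∈ Set.Ioc (0:ℝ) 1 := by norm_num
  have m2 : (1/2:ℝ) ∈ Set.Ioc (0:ℝ) 1 := by norm_num
  have m3 : (1:ℝ) ∈ Set.Ioc (0:ℝ) 1 := by norm_num
  rcases lt_trichotomy (e + p * (1/4) + q * (1/4) ^ 2) (e + p * (1/2) + q * (1/2) ^ 2) with hh | hh | hh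
  · exact key _ m1 _ m2 hh
  · rcases lt_trichotomy (e + p * (1/2) + q * (1/2) ^ 2) (e + p * 1 + q * 1 ^ 2) with hk | hk | hk
    · exact key _ m2 _ m3 hk
    · exfalso
      have hq : q = 0 := by linarith
      have hp : p = 0 := by rw [hq] at hk; linarith
      rcases hne with hn | hn
      · exact hn hp
      · exact hn hq
    · exact key _ m3 _ m2 hk
  · exact key _ m2 _ m1 hh

section per0
variable {X : Type*} [TopologicalSpace X] {ax : X → SL2C → X}

lemma per_times (h : RA ax) {z : X} {τ : ℝ} (hτ : τ ≠ 0) (hz : ax z (uMat τ) = z) {R : ℕ → ℝ}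
    (hR : Tendsto R atTop atTop) {θ : ℝ} (hθ : 0 < θ) :
    ∃ s : ℕ → ℝ, (∀ k, ax z (uMat (s k)) = z) ∧ Tendsto s atTop atTop ∧
      Tendsto (fun k => s k / R k) atTop (nhds θ) := by
  have hpos : ∃ τ' : ℝ, 0 < τ' ∧ ax z (uMat τ') = z := by
    rcases lt_or_gt_of_ne hτ with hh | hh
    · refine ⟨-τ, by linarith, ?_⟩
      conv_lhs => rw [← hz]
      rw [← h.mul, ← u_add]
      simp [u_zero, h.one]
    · exact ⟨τ, hh, hz⟩
  obtain ⟨τ', hτ', hz'⟩ := hpos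
  have hn : ∀ n : ℕ, ax z (uMat ((n * τ' : ℝ))) = z := by
    intro n
    induction n with
    | zero => simp [u_zero, h.one]
    | succ n ih =>
      have : (((n + 1 : ℕ) * τ' : ℝ) : ℂ) = ((n * τ' : ℝ) : ℂ) + (τ' : ℂ) := by push_cast; ring
      rw [this, u_add, h.mul, ih, hz']
  have hdiv : Tendsto (fun k => (⌊θ / τ' * R k⌋₊ : ℝ) / R k) atTop (nhds (θ / τ')) :=
    (tendsto_nat_floor_mul_div_atTop (R := ℝ) (by positivity : (0:ℝ) ≤ θ / τ')).comp hR
  have hfl : Tendsto (fun k => (⌊θ / τ' * R k⌋₊ : ℝ)) atTop atTop :=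
    tendsto_natCast_atTop_atTop.comp (tendsto_nat_floor_atTop.comp (hR.const_mul_atTop (by positivity)))
  refine ⟨fun k => ⌊θ / τ' * R k⌋₊ * τ', fun k => hn _, hfl.atTop_mul_const hτ', ?_⟩
  have := hdiv.mul_const τ'
  rw [div_mul_cancel₀ _ hτ'.ne'] at this
  refine this.congr fun k => ?_
  ring

lemma scale_lim {E : Type*} [NormedAddCommGroup E] [NormedSpace ℝ E] {s R : ℕ → ℝ} {p : ℕ → E}
    {θ : ℝ} {p' : E} (hR : Tendsto R atTop atTop)
    (hs : Tendsto (fun k => s k / R k) atTop (nhds θ))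
    (hp : Tendsto (fun k => R k • p k) atTop (nhds p')) :
    Tendsto (fun k => s k • p k) atTop (nhds (θ • p')) := by
  refine (hs.smul hp).congr' ?_
  filter_upwards [hR.eventually_gt_atTop 0] with k hk
  rw [smul_smul, div_mul_cancel₀ _ hk.ne']

lemma scale_lim2 {s R : ℕ → ℝ} {p : ℕ → ℝ}
    {θ : ℝ} {p' : ℝ} (hR : Tendsto R atTop atTop)
    (hs : Tendsto (fun k => s k / R k) atTop (nhds θ))
    (hp : Tendsto (fun k => R k ^ 2 * p k) atTop (nhds p')) :
    Tendsto (fun k => s k ^ 2 * p k) atTop (nhds (θ ^ 2 * p')) := by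
  refine ((hs.pow 2).mul hp).congr' ?_
  filter_upwards [hR.eventually_gt_atTop 0] with k hk
  field_simp

lemma per_core (h : RA ax) {z : X} {τ : ℝ} (hτ : τ ≠ 0) (hz : ax z (uMat τ) = z) {g : ℕ → SL2C}
    {R : ℕ → ℝ} {p1 : ℂ} {p2 q2 : ℝ} (hg : Tendsto g atTop (nhds 1)) (hR : Tendsto R atTop atTop)
    (h1 : Tendsto (fun k => (R k : ℂ) * g k 1 0) atTop (nhds p1))
    (h2 : Tendsto (fun k => R k * P1 (g k)) atTop (nhds p2))
    (h3 : Tendsto (fun k => R k ^ 2 * P2 (g k)) atTop (nhds q2)) :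
    ∃ κ : ℝ, p1 = κ ∧ ∀ θ : ℝ, 0 < θ → ∀ hα : 0 < 1 - θ * κ, ∀ F : Set X, IsClosed F → UInv ax F →
      (∀ k, ax z (g k) ∈ F) →
      ax (ax z (uMat (((θ * p2 + θ ^ 2 * q2 : ℝ) : ℂ) * Complex.I))) (dMat (1 - θ * κ) hα) ∈ F := by
  have hreal := kappa_real hg hR h1 h3
  refine ⟨p1.re, by apply Complex.ext <;> simp [hreal], ?_⟩
  intro θ hθ hα F hF hU hgF
  obtain ⟨s, hsz, hs, hsR⟩ := per_times h hτ hz hR hθ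
  have a1 : Tendsto (fun k => (s k : ℂ) * g k 1 0) atTop (nhds ((θ * p1.re : ℝ) : ℂ)) := by
    have := scale_lim hR hsR (p := fun k => g k 1 0) (p' := p1) (by simpa using h1)
    simp only [Complex.real_smul] at this
    convert this using 2
    apply Complex.ext <;> simp [hreal]
  have a2 := scale_lim hR hsR (p := fun k => P1 (g k)) (p' := p2) (by simpa using h2)
  have a3 := scale_lim2 hR hsR h3
  simp only [smul_eq_mul] at a2
  obtain ⟨t, ht⟩ := conj_lim hg a1 (a2.add a3) hα
  have hl := ((h.contl z).tendsto _).comp ht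
  have hmem := hF.mem_of_tendsto hl (Eventually.of_forall fun k => by
    have e : ax z (uMat (s k))⁻¹ = z := by
      conv_lhs => rw [← hsz k]
      exact h.mul_inv _ _
    simp only [Function.comp]
    rw [h.mul, h.mul, e]
    exact hU _ (hgF k) _)
  rw [tri_eq _ hα, h.mul] at hmem
  convert hmem using 4
  have : ((1 - θ * p1.re : ℝ) : ℂ) ≠ 0 := by exact_mod_cast hα.ne'
  push_cast at this ⊢
  field_simp

end per0

section per
open MeasureTheory
variable {X : Type*} [TopologicalSpace X] [MeasurableSpace X] [BorelSpace X]
  [SecondCountableTopology X] {ax : X → SL2C → X} {μ : Measure X}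

lemma UInv.shift (h : RA ax) {F : Set X} (hU : UInv ax F) (w : ℂ) :
    UInv ax {y | ax y (uMat w) ∈ F} := by
  intro y hy t
  have hy' : ax y (uMat w) ∈ F := hy
  change ax (ax y (uMat t)) (uMat w) ∈ F
  rw [← h.mul, u_comm, h.mul]
  exact hU _ hy' _

lemma closed_shift (h : RA ax) {F : Set X} (hF : IsClosed F) (w : ℂ) :
    IsClosed {y | ax y (uMat w) ∈ F} := hF.preimage (h.contr (uMat w))

/-- contracting along the diagonal group -/
lemma lemB1 (h : RA ax) (hμ : RM ax μ) {F : Set X} (hF : IsClosed F) (hU : UInv ax F)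
    (hD : DInv ax F) {y0 : X} (hy0 : y0 ∈ F) {δ : ℕ → ℝ} (hδ : ∀ n, 0 < δ n)
    (hδ0 : Tendsto δ atTop (nhds 0)) {ς : ℝ} (hς : ς ≠ 0)
    (hv : ∀ n, ax (ax y0 (dMat (δ n) (hδ n))) (uMat (ς * Complex.I)) ∈ F) : F = Set.univ := by
  obtain ⟨y, hy⟩ : ∃ y : ℕ → X, y = fun n => ax y0 (dMat (δ n) (hδ n)) := ⟨_, rfl⟩
  have hyF : ∀ n, y n ∈ F := fun n => by rw [hy]; exact hD _ hy0 _ _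
  have hyv : ∀ n, ax (y n) (uMat (ς * Complex.I)) ∈ F := fun n => by rw [hy]; exact hv n
  let A : ℕ → Set X := fun m => {w | ∃ n ≥ m, ∃ t : ℝ, ax (y n) (uMat t) = w}
  let E : Set X := ⋂ m, closure (A m)
  have hE : IsClosed E := isClosed_iInter fun m => isClosed_closure
  have hEU : UInv ax E := by
    intro w hw t
    rw [Set.mem_iInter] at hw ⊢
    intro m
    refine map_mem_closure (f := fun x => ax x (uMat t)) (h.contr (uMat t)) (hw m) ?_
    rintro _ ⟨n, hn, t', rfl⟩
    refine ⟨n, hn, t' + t, ?_⟩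
    beta_reduce
    rw [← h.mul, ← u_add]
    push_cast
    rfl
  have hEF : E ⊆ F := by
    intro w hw
    rw [Set.mem_iInter] at hw
    refine closure_minimal ?_ hF (hw 0)
    rintro _ ⟨n, hn, t', rfl⟩
    exact hU _ (hyF n) _
  have hEv : ∀ w ∈ E, ax w (uMat (ς * Complex.I)) ∈ F := by
    intro w hw
    rw [Set.mem_iInter] at hw
    refine closure_minimal ?_ (closed_shift h hF (ς * Complex.I)) (hw 0)
    rintro _ ⟨n, hn, t', rfl⟩
    exact hU.shift h _ _ (hyv n) _
  have hEK : ∃ w ∈ E, w ∈ Kset ax e0 := by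
    obtain ⟨d0, hd0, hN⟩ := Ncond_small h y0
    obtain ⟨M, hM⟩ := eventually_atTop.1 (hδ0.eventually (gt_mem_nhds hd0))
    have hex : ∀ n : ℕ, ∃ s : ℝ, ax (y (n + M)) (uMat s) ∈ Kset ax e0 := by
      intro n
      have := hN _ (hδ (n + M)) (hM _ (by omega))
      obtain ⟨l0, hl0, hl⟩ := lemF h this
      obtain ⟨s, -, hs⟩ := hl l0 le_rfl
      exact ⟨s, by rw [hy]; exact hs⟩
    choose s hs using hex
    obtain ⟨w, hw, φ, hφ, hlim⟩ := lemE h hμ e0_pos hs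
    refine ⟨w, ?_, hw⟩
    rw [Set.mem_iInter]
    intro m
    refine mem_closure_of_tendsto hlim ?_
    filter_upwards [eventually_ge_atTop m] with n hn
    exact ⟨φ n + M, by have := hφ.le_apply (x := n); omega, s (φ n), rfl⟩
  obtain ⟨Y, hYE, hY⟩ := exists_Kmin h hμ hE hEU hEK
  obtain ⟨z, hzY, hzK⟩ := hY.ne
  by_cases hper : ∀ t : ℝ, t ≠ 0 → ax z (uMat t) ≠ z
  · exact lemG3 h hμ hF hU hD hY (hYE.trans hEF) hzY hzK hper hς fun w hw => hEv w (hYE hw)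
  push Not at hper
  obtain ⟨τ, hτ, hz⟩ := hper
  have hseq : ∀ k : ℕ, ∃ n ≥ k, ∃ (t : ℝ) (w : SL2C), dist1 w < 1 / ((k : ℝ) + 1) ∧
      ax (y n) (uMat t) = ax z w := by
    intro k
    have hzE := hYE hzY
    rw [Set.mem_iInter] at hzE
    have hW : {w : SL2C | dist1 w < 1 / ((k : ℝ) + 1)} ∈ nhds (1 : SL2C) := by
      apply (isOpen_lt continuous_dist1 continuous_const).mem_nhds
      simp only [Set.mem_ofPred_eq, dist1_one]
      positivity
    have hW2 := (h.opn z).image_mem_nhds hW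
    rw [h.one] at hW2
    obtain ⟨_, ⟨w, hw, rfl⟩, n, hn, t, hnt⟩ := mem_closure_iff_nhds.1 (hzE k) _ hW2
    exact ⟨n, hn, t, w, hw, hnt⟩
  choose ν hν t w hw hwy using hseq
  have hw1 : Tendsto w atTop (nhds 1) := by
    refine tendsto_one_of_dist1 (squeeze_zero (fun k => ?_) (fun k => (hw k).le)
      tendsto_one_div_add_atTop_nhds_zero_nat)
    unfold dist1
    positivity
  have hνt : Tendsto ν atTop atTop := tendsto_atTop_mono hν tendsto_id
  have hcne : ∀ᶠ k in atTop, w k 1 0 ≠ 0 := by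
    obtain ⟨r, hr, hN⟩ := N_size h y0
    have t1 : Tendsto (fun k => δ (ν k) ^ 2 * (‖(τ : ℂ)‖ * ‖w k 1 1‖ ^ 2)) atTop (nhds 0) := by
      have a1 := ((hδ0.comp hνt).pow 2).mul ((((tendsto_SL.1 hw1).2.2.2.norm).pow 2).const_mul ‖(τ : ℂ)‖)
      simpa [Function.comp_def] using a1
    filter_upwards [t1.eventually (gt_mem_nhds hr)] with k hk hc
    have hdet := SL_det (w k)
    rw [hc, mul_zero, sub_zero] at hdet
    have hd : w k 1 1 ≠ 0 := fun e => by rw [e, mul_zero] at hdet; exact zero_ne_one hdet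
    have hτc : (τ : ℂ) ≠ 0 := by exact_mod_cast hτ
    have e1 : w k * uMat (τ * w k 1 1 ^ 2) = uMat τ * w k := by
      apply SL_ext
      · simp [hc]
      · simp
        linear_combination (τ : ℂ) * w k 1 1 * hdet
      · simp [hc]
      · simp [hc]
    have e2 : ax (y (ν k)) (uMat (τ * w k 1 1 ^ 2)) = y (ν k) := by
      have e3 : ax (ax z (w k)) (uMat (τ * w k 1 1 ^ 2)) = ax z (w k) := by
        rw [← h.mul, e1, h.mul, hz]
      rw [← hwy, ← h.mul, u_comm, h.mul] at e3
      have := congrArg (fun q => ax q (uMat (t k))⁻¹) e3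
      simpa only [h.mul_inv] using this
    rw [hy] at e2
    have := hN _ (hδ (ν k)) _ (mul_ne_zero hτc (pow_ne_zero 2 hd)) e2
    rw [div_le_iff₀ (by have := hδ (ν k); positivity), norm_mul, norm_pow] at this
    linarith
  obtain ⟨M, hM⟩ := eventually_atTop.1 hcne
  obtain ⟨v, hv'⟩ : ∃ v : ℕ → SL2C, v = fun n => w (n + M) := ⟨_, rfl⟩
  have hvt : Tendsto v atTop (nhds 1) := by rw [hv']; exact hw1.comp (tendsto_add_atTop_nat M)
  have hvc : ∀ n, v n 1 0 ≠ 0 := fun n => by rw [hv']; exact hM _ (by omega)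
  have hvF : ∀ n, ax z (v n) ∈ F := fun n => by rw [hv']; simp only []; rw [← hwy]; exact hU _ (hyF _) _
  have hvF2 : ∀ n, ax z (v n) ∈ {y | ax y (uMat (ς * Complex.I)) ∈ F} := fun n => by
    rw [hv']; simp only []; rw [← hwy]; exact hU.shift h _ _ (hyv _) _
  have hvct : Tendsto (fun n => v n 1 0) atTop (nhds 0) := by simpa using (tendsto_SL.1 hvt).2.2.1
  have hv1t : Tendsto (fun n => P1 (v n)) atTop (nhds 0) := by
    have := (continuous_P1.tendsto 1).comp hvt
    rwa [P1_one] at this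
  have hv2t : Tendsto (fun n => P2 (v n)) atTop (nhds 0) := by
    have := (continuous_P2.tendsto 1).comp hvt
    rwa [P2_one] at this
  obtain ⟨φ, R, p', q', hφ, hR, hp, hq, hne, n1, n2⟩ := poly_lim
      (p := fun n => ((v n 1 0, P1 (v n)) : ℂ × ℝ)) (q := fun n => ((0, P2 (v n)) : ℂ × ℝ))
      (η := 1 / 2)
      (hvct.prodMk_nhds hv1t) (tendsto_const_nhds.prodMk_nhds hv2t) (by
        intro n
        left
        intro e
        rw [Prod.mk_eq_zero] at e
        exact hvc n e.1) (by positivity)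
  have hp1 : Tendsto (fun k => (R k : ℂ) * v (φ k) 1 0) atTop (nhds p'.1) := by
    have := (continuous_fst.tendsto p').comp hp
    simpa [Function.comp_def] using this
  have hp2 : Tendsto (fun k => R k * P1 (v (φ k))) atTop (nhds p'.2) := by
    have := (continuous_snd.tendsto p').comp hp
    simpa [Function.comp_def] using this
  have hq1 : q'.1 = 0 := by
    have := (continuous_fst.tendsto q').comp hq
    simp only [Function.comp_def, Prod.smul_fst, smul_zero] at this
    exact tendsto_nhds_unique this tendsto_const_nhds
  have hq2 : Tendsto (fun k => R k ^ 2 * P2 (v (φ k))) atTop (nhds q'.2) := by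
    have := (continuous_snd.tendsto q').comp hq
    simpa [Function.comp_def] using this
  obtain ⟨κ, hκ, hcore⟩ := per_core h hτ hz (hvt.comp hφ) hR hp1 hp2 hq2
  have hκη : |κ| ≤ 1 / 2 := by
    have := (norm_fst_le p').trans n1
    rwa [hκ, Complex.norm_real, Real.norm_eq_abs] at this
  have hα : ∀ θ ∈ Set.Ioc (0:ℝ) 1, 0 < 1 - θ * κ := by
    intro θ hθ
    have := (abs_le.1 hκη).2
    nlinarith [hθ.1, hθ.2]
  have r1 : ∀ θ ∈ Set.Ioc (0:ℝ) 1,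
      ax z (uMat (((θ * p'.2 + θ ^ 2 * q'.2 : ℝ) : ℂ) * Complex.I)) ∈ F := fun θ hθ =>
    hD.cancel h (hcore θ hθ.1 (hα θ hθ) F hF hU fun k => hvF _)
  have r2 : ∀ θ ∈ Set.Ioc (0:ℝ) 1,
      ax z (uMat (((θ * p'.2 + θ ^ 2 * q'.2 + ς * (1 - θ * κ) ^ 2 : ℝ) : ℂ) * Complex.I)) ∈ F := by
    intro θ hθ
    have h1 := hcore θ hθ.1 (hα θ hθ) _ (closed_shift h hF (ς * Complex.I)) (hU.shift h _)
      fun k => hvF2 _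
    have h2 : ax (ax (ax z (uMat (((θ * p'.2 + θ ^ 2 * q'.2 : ℝ) : ℂ) * Complex.I)))
      (dMat (1 - θ * κ) (hα θ hθ))) (uMat (ς * Complex.I)) ∈ F := h1
    apply hD.cancel h (δ := 1 - θ * κ) (hδ := hα θ hθ)
    convert h2 using 1
    rw [← h.mul, ← h.mul, ← h.mul, u_dMat, ← mul_assoc, ← u_add]
    congr 3
    push_cast
    ring
  by_cases hcase : p'.2 ≠ 0 ∨ q'.2 ≠ 0
  · obtain ⟨a, b, hab, hI⟩ := quad_interval (e := 0) hcase
    refine lemG0 h hμ hF hU hD hab (z := z) fun σ hσ => ?_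
    obtain ⟨θ, hθ, rfl⟩ := hI σ hσ
    convert r1 θ hθ using 4
    push_cast
    ring
  · push Not at hcase
    have hκ0 : κ ≠ 0 := by
      rintro rfl
      rcases hne with hn | hn
      · exact hn (Prod.ext (by simpa using hκ) hcase.1)
      · exact hn (Prod.ext hq1 hcase.2)
    obtain ⟨a, b, hab, hI⟩ := quad_interval (e := ς) (p := -2 * ς * κ) (q := ς * κ ^ 2)
      (Or.inr (mul_ne_zero hς (pow_ne_zero 2 hκ0)))
    refine lemG0 h hμ hF hU hD hab (z := z) fun σ hσ => ?_
    obtain ⟨θ, hθ, rfl⟩ := hI σ hσ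
    convert r2 θ hθ using 4
    rw [hcase.1, hcase.2]
    push_cast
    ring

lemma lemB (h : RA ax) (hμ : RM ax μ) {F : Set X} (hF : IsClosed F) (hU : UInv ax F)
    (hD : DInv ax F) {y0 : X} (hy0 : y0 ∈ F) {σ : ℕ → ℝ} (hσ : ∀ n, σ n ≠ 0)
    (hσ0 : Tendsto σ atTop (nhds 0))
    (hv : ∀ n, ax y0 (uMat (σ n * Complex.I)) ∈ F) : F = Set.univ := by
  have key : ∀ ς : ℝ, ς ^ 2 = 1 → (∃ᶠ n in atTop, 0 < ς * σ n) → F = Set.univ := by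
    intro ς hς hfr
    obtain ⟨χ, hχ, hχ'⟩ := extraction_of_frequently_atTop hfr
    refine lemB1 h hμ hF hU hD hy0 (δ := fun n => √(ς * σ (χ n))) (ς := ς)
      (fun n => Real.sqrt_pos.2 (hχ' n)) ?_ (by rintro rfl; norm_num at hς) fun n => ?_
    · have := (hσ0.comp hχ.tendsto_atTop).const_mul ς |>.sqrt
      simpa [Function.comp_def] using this
    · rw [← h.mul, u_dMat, h.mul]
      apply hD
      convert hv (χ n) using 3
      have e : (√(ς * σ (χ n))) ^ 2 = ς * σ (χ n) := Real.sq_sqrt (hχ' n).le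
      have e' : ((√(ς * σ (χ n)) : ℝ) : ℂ) ^ 2 = ς * σ (χ n) := by exact_mod_cast e
      have e2 : (ς : ℂ) ^ 2 = 1 := by exact_mod_cast hς
      rw [e']
      linear_combination (σ (χ n) : ℂ) * Complex.I * e2
  have hor : ∃ᶠ n in atTop, 0 < 1 * σ n ∨ 0 < (-1) * σ n := by
    refine (Eventually.of_forall fun n => ?_).frequently
    rcases lt_or_gt_of_ne (hσ n) with hh | hh
    · right; linarith
    · left; linarith
  rcases frequently_or_distrib.1 hor with hh | hh
  · exact key 1 (by norm_num) hh
  · exact key (-1) (by norm_num) hh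

end per


/-! ### Real matrices and the main argument -/

/-- real matrices in `SL(2,ℂ)` -/
def RealM (g : SL2C) : Prop :=
  (g 0 0).im = 0 ∧ (g 0 1).im = 0 ∧ (g 1 0).im = 0 ∧ (g 1 1).im = 0

lemma RealM.mul {g k : SL2C} (hg : RealM g) (hk : RealM k) : RealM (g * k) := by
  obtain ⟨a1, a2, a3, a4⟩ := hg
  obtain ⟨b1, b2, b3, b4⟩ := hk
  refine ⟨?_, ?_, ?_, ?_⟩ <;> simp [a1, a2, a3, a4, b1, b2, b3, b4]

lemma RealM.inv {g : SL2C} (hg : RealM g) : RealM g⁻¹ := by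
  obtain ⟨a1, a2, a3, a4⟩ := hg
  refine ⟨?_, ?_, ?_, ?_⟩ <;> simp [a1, a2, a3, a4]

lemma RealM_one : RealM 1 := by
  refine ⟨?_, ?_, ?_, ?_⟩ <;> simp

lemma RealM_u (t : ℝ) : RealM (uMat t) := by
  refine ⟨?_, ?_, ?_, ?_⟩ <;> simp

lemma RealM_l (t : ℝ) : RealM (lMat t) := by
  refine ⟨?_, ?_, ?_, ?_⟩ <;> simp

lemma RealM_d (δ : ℝ) (hδ : 0 < δ) : RealM (dMat δ hδ) := by
  unfold dMat
  refine ⟨?_, ?_, ?_, ?_⟩ <;> simp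

/-- a matrix in the borderline case -/
lemma tri_of {g : SL2C} (hc : g 1 0 = 0) (hP : P1 g = 0) (hpos : 0 < (g 0 0).re) (hnr : ¬ RealM g) :
    (g 0 1).im ≠ 0 ∧ ∃ t : ℝ, g * uMat t =
      uMat (((g 0 1).im * (g 0 0).re : ℝ) * Complex.I) * dMat (g 0 0).re hpos := by
  have hdet := SL_det g
  rw [hc, mul_zero, sub_zero] at hdet
  have him : (g 1 1 * star (g 0 0)).im = 0 := by
    simp only [P1, hc] at hP
    simp at hP ⊢
    linarith
  have e1 : star (g 0 0) = ((g 1 1 * star (g 0 0)).re : ℝ) * g 0 0 := by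
    have e2 : ((g 1 1 * star (g 0 0)).re : ℂ) = g 1 1 * star (g 0 0) := by
      apply Complex.ext
      · simp
      · rw [him]; simp
    rw [e2]
    linear_combination -star (g 0 0) * hdet
  set ρ := (g 1 1 * star (g 0 0)).re
  have e3 := congrArg Complex.re e1
  have e4 := congrArg Complex.im e1
  simp at e3 e4
  have e5 : ρ = 1 := by
    have : (ρ - 1) * (g 0 0).re = 0 := by linarith
    have := (mul_eq_zero.1 this).resolve_right hpos.ne'
    linarith
  have e6 : (g 0 0).im = 0 := by rw [e5] at e4; linarith
  have ea : g 0 0 = ((g 0 0).re : ℝ) := by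
    apply Complex.ext
    · simp
    · simp [e6]
  have hne : ((g 0 0).re : ℂ) ≠ 0 := by exact_mod_cast hpos.ne'
  have ed : g 1 1 = ((g 0 0).re : ℂ)⁻¹ := by
    apply eq_inv_of_mul_eq_one_left
    rw [← ea]
    linear_combination hdet
  constructor
  · intro hb
    refine hnr ⟨e6, hb, by simp [hc], ?_⟩
    rw [ed, ← Complex.ofReal_inv, Complex.ofReal_im]
  · refine ⟨-(g 0 1).re / (g 0 0).re, ?_⟩
    unfold dMat
    apply SL_ext
    · simp [← ea]
    · simp only [t01, t11, mul01, u00, u01, u11]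
      rw [ea]
      simp only [Complex.ofReal_re]
      push_cast
      rw [mul_div_cancel₀ _ hne]
      field_simp
      apply Complex.ext <;> simp
    · simp [hc]
    · simp [hc, ed]

section core
open MeasureTheory
variable {X : Type*} [TopologicalSpace X] [MeasurableSpace X] [BorelSpace X]
  [SecondCountableTopology X] {ax : X → SL2C → X} {μ : Measure X}

/-- invariance under the real group -/
def HInv {X : Type*} (ax : X → SL2C → X) (F : Set X) : Prop := ∀ x ∈ F, ∀ g, RealM g → ax x g ∈ F

lemma HInv.u {F : Set X} (hF : HInv ax F) : UInv ax F := fun x hx t => hF x hx _ (RealM_u t)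

lemma HInv.d {F : Set X} (hF : HInv ax F) : DInv ax F := fun x hx δ hδ => hF x hx _ (RealM_d δ hδ)

/-- transverse approach -/
def App {X : Type*} (ax : X → SL2C → X) (F : Set X) (y : X) : Prop :=
  ∀ W ∈ nhds (1 : SL2C), ∃ g ∈ W, ¬ RealM g ∧ ax y g ∈ F

lemma App.seq (h : RA ax) {F : Set X} (hH : HInv ax F) {y : X} (hA : App ax F y) :
    ∃ r : ℕ → SL2C, Tendsto r atTop (nhds 1) ∧ ∀ n, ¬ RealM (r n) ∧ ax y (r n) ∈ F ∧
      (r n 1 0).re = 0 ∧ 1 / 2 < (r n 1 1).re ∧ 0 < (r n 0 0).re := by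
  have hseq : ∀ k : ℕ, ∃ w : SL2C, dist1 w < 1 / ((k : ℝ) + 1) ∧ ¬ RealM w ∧ ax y w ∈ F := by
    intro k
    have hW : {w : SL2C | dist1 w < 1 / ((k : ℝ) + 1)} ∈ nhds (1 : SL2C) := by
      apply (isOpen_lt continuous_dist1 continuous_const).mem_nhds
      simp only [Set.mem_ofPred_eq, dist1_one]
      positivity
    exact hA _ hW
  choose w hw hwr hwF using hseq
  have hw1 : Tendsto w atTop (nhds 1) := by
    refine tendsto_one_of_dist1 (squeeze_zero (fun k => ?_) (fun k => (hw k).le)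
      tendsto_one_div_add_atTop_nhds_zero_nat)
    unfold dist1
    positivity
  have hd : Tendsto (fun n => (w n 1 1).re) atTop (nhds 1) := by
    have := (Complex.continuous_re.tendsto _).comp (tendsto_SL.1 hw1).2.2.2
    simpa [Function.comp_def] using this
  have hc : Tendsto (fun n => (w n 1 0).re) atTop (nhds 0) := by
    have := (Complex.continuous_re.tendsto _).comp (tendsto_SL.1 hw1).2.2.1
    simpa [Function.comp_def] using this
  have hq : Tendsto (fun n => -(w n 1 0).re / (w n 1 1).re) atTop (nhds 0) := by
    have := hc.neg.div hd one_ne_zero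
    rw [neg_zero, zero_div] at this
    exact this
  obtain ⟨r, hr⟩ : ∃ r : ℕ → SL2C, r = fun n => w n * lMat ((-(w n 1 0).re / (w n 1 1).re : ℝ)) :=
    ⟨_, rfl⟩
  have hl : Tendsto (fun n => lMat ((-(w n 1 0).re / (w n 1 1).re : ℝ))) atTop (nhds 1) := by
    have h1 := (continuous_l.tendsto _).comp ((Complex.continuous_ofReal.tendsto _).comp hq)
    have e : lMat ((0 : ℝ) : ℂ) = 1 := by apply SL_ext <;> simp
    rw [e] at h1
    exact h1
  have hr1 : Tendsto r atTop (nhds 1) := by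
    have := hw1.mul hl
    rw [mul_one] at this
    rw [hr]
    exact this
  have hrd : Tendsto (fun n => (r n 1 1).re) atTop (nhds 1) := by
    have := (Complex.continuous_re.tendsto _).comp (tendsto_SL.1 hr1).2.2.2
    simpa [Function.comp_def] using this
  have hra : Tendsto (fun n => (r n 0 0).re) atTop (nhds 1) := by
    have := (Complex.continuous_re.tendsto _).comp (tendsto_SL.1 hr1).1
    simpa [Function.comp_def] using this
  have hev : ∀ᶠ n in atTop, (r n 1 0).re = 0 ∧ 1 / 2 < (r n 1 1).re ∧ 0 < (r n 0 0).re := by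
    filter_upwards [hd.eventually (lt_mem_nhds (by norm_num : (0:ℝ) < 1)),
      hrd.eventually (lt_mem_nhds (by norm_num : (1/2:ℝ) < 1)),
      hra.eventually (lt_mem_nhds (by norm_num : (0:ℝ) < 1))] with n a1 a2 a3
    refine ⟨?_, a2, a3⟩
    rw [hr]
    simp only [mul10, l00, l10]
    rw [Complex.add_re, Complex.re_mul_ofReal, mul_one, mul_div_cancel₀ _ a1.ne']
    ring
  obtain ⟨N, hN⟩ := eventually_atTop.1 hev
  refine ⟨fun n => r (n + N), hr1.comp (tendsto_add_atTop_nat N), fun n => ⟨?_, ?_, hN _ (by omega)⟩⟩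
  · intro hh
    apply hwr (n + N)
    have := hh.mul (RealM_l (-(w (n + N) 1 0).re / (w (n + N) 1 1).re)).inv
    rwa [hr, mul_inv_cancel_right] at this
  · rw [hr, h.mul]
    exact hH _ (hwF _) _ (RealM_l _)

lemma c_lim {r : ℕ → SL2C} {s : ℕ → ℝ} {q : ℝ} (hs : Tendsto s atTop atTop)
    (hr : ∀ n, (r n 1 0).re = 0 ∧ 1 / 2 < (r n 1 1).re)
    (hq : Tendsto (fun n => s n ^ 2 * P2 (r n)) atTop (nhds q)) :
    Tendsto (fun n => (s n : ℂ) * r n 1 0) atTop (nhds 0) := by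
  have hle : ∀ n, ‖r n 1 0‖ ≤ 2 * |P2 (r n)| := by
    intro n
    obtain ⟨h1, h2⟩ := hr n
    have e : P2 (r n) = -((r n 1 1).re * (r n 1 0).im) := by simp [P2, h1]
    have e2 : r n 1 0 = ((r n 1 0).im : ℂ) * Complex.I := by apply Complex.ext <;> simp [h1]
    rw [e, abs_neg, abs_mul, abs_of_pos (by linarith)]
    have e3 : ‖r n 1 0‖ = |(r n 1 0).im| := by
      conv_lhs => rw [e2]
      simp
    rw [e3]
    nlinarith [abs_nonneg (r n 1 0).im]
  have t1 : Tendsto (fun n => 2 * |s n ^ 2 * P2 (r n)| / s n) atTop (nhds 0) :=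
    (hq.abs.const_mul 2).div_atTop hs
  rw [tendsto_zero_iff_norm_tendsto_zero]
  refine squeeze_zero' (Eventually.of_forall fun n => norm_nonneg _) ?_ t1
  filter_upwards [hs.eventually_gt_atTop 0] with n hn
  rw [norm_mul, Complex.norm_real, Real.norm_eq_abs, abs_of_pos hn, abs_mul, abs_of_pos (pow_pos hn 2)]
  have := hle n
  have e : 2 * (s n ^ 2 * |P2 (r n)|) / s n = s n * (2 * |P2 (r n)|) := by field_simp
  rw [e]
  exact mul_le_mul_of_nonneg_left this hn.le

lemma core_thm (h : RA ax) (hμ : RM ax μ) {F F' : Set X} (hF : IsClosed F) (hH : HInv ax F)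
    (hF' : IsClosed F') (hH' : HInv ax F') (hne : F'.Nonempty) (hsub : F' ⊆ F)
    (hA : ∀ y ∈ F', App ax F y) : F = Set.univ := by
  obtain ⟨Y, hYF', hY⟩ := exists_Kmin h hμ hF' hH'.u (meets_K h hH'.u hH'.d hne)
  obtain ⟨y0, hy0, hy0K⟩ := hY.ne
  obtain ⟨r, hr, hprop⟩ := (hA y0 (hYF' hy0)).seq h hH
  by_cases hfr : ∃ᶠ n in atTop, P1 (r n) ≠ 0 ∨ r n 1 0 ≠ 0
  · obtain ⟨χ, hχ, hχ'⟩ := extraction_of_frequently_atTop hfr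
    obtain ⟨v, hv⟩ : ∃ v : ℕ → SL2C, v = r ∘ χ := ⟨_, rfl⟩
    have hvt : Tendsto v atTop (nhds 1) := by rw [hv]; exact hr.comp hχ.tendsto_atTop
    have hvF : ∀ n, ax y0 (v n) ∈ F := fun n => by rw [hv]; exact (hprop _).2.1
    have hvr : ∀ n, (v n 1 0).re = 0 ∧ 1 / 2 < (v n 1 1).re := fun n => by
      rw [hv]; exact ⟨(hprop _).2.2.1, (hprop _).2.2.2.1⟩
    have hvne : ∀ n, P1 (v n) ≠ 0 ∨ P2 (v n) ≠ 0 := by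
      intro n
      have h1 : P1 (v n) ≠ 0 ∨ v n 1 0 ≠ 0 := by rw [hv]; exact hχ' n
      refine h1.imp id fun hc hP => hc ?_
      obtain ⟨h1, h2⟩ := hvr n
      have e : P2 (v n) = -((v n 1 1).re * (v n 1 0).im) := by simp [P2, h1]
      rw [e, neg_eq_zero] at hP
      have := (mul_eq_zero.1 hP).resolve_left (by linarith)
      apply Complex.ext <;> simp [h1, this]
    have hv1t : Tendsto (fun n => P1 (v n)) atTop (nhds 0) := by
      have := (continuous_P1.tendsto 1).comp hvt
      rwa [P1_one] at this
    have hv2t : Tendsto (fun n => P2 (v n)) atTop (nhds 0) := by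
      have := (continuous_P2.tendsto 1).comp hvt
      rwa [P2_one] at this
    by_cases hper : ∀ t : ℝ, t ≠ 0 → ax y0 (uMat t) ≠ y0
    · obtain ⟨l0, hl0, hl⟩ := lemF h (Ncond_of_K hy0K)
      obtain ⟨φ, s, p', q', hφ, hs, hsT, hp, hq, hne, -, -⟩ := poly_thick
        (T := {s : ℝ | ax y0 (uMat s) ∈ Kset ax e0}) hv1t hv2t hvne one_pos hl
      simp only [smul_eq_mul] at hp hq
      have hc := c_lim (r := v ∘ φ) hs (fun n => hvr _) hq
      obtain ⟨t, ht⟩ := conj_lim (κ := 0) (hvt.comp hφ) (by simpa using hc) (hp.add hq) (by norm_num)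
      obtain ⟨z, hzK, χ', hχ', hz⟩ := lemE h hμ e0_pos hsT
      have hzY : z ∈ Y := hY.cl.mem_of_tendsto hz (Eventually.of_forall fun n => hY.ui _ hy0 _)
      have hlim := h.tend hz (ht.comp hχ'.tendsto_atTop)
      have hmem := hF.mem_of_tendsto hlim (Eventually.of_forall fun n => by
        simp only [Function.comp]
        rw [h.mul, h.mul, h.mul_inv]
        exact hH.u _ (hvF _) _)
      rw [tri_eq _ (by norm_num), h.mul] at hmem
      have hmem2 := hH.d.cancel h hmem
      refine lemG3 h hμ hF hH.u hH.d hY (hYF'.trans hsub) hy0 hy0K hper hne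
        (hY.push_v h hF hH.u hzY hzK ?_)
      convert hmem2 using 3
      push_cast
      simp
    · push Not at hper
      obtain ⟨τ, hτ, hz⟩ := hper
      obtain ⟨φ, R, p', q', hφ, hR, hp, hq, hne, -, -⟩ := poly_lim hv1t hv2t hvne one_pos
      simp only [smul_eq_mul] at hp hq
      have hc := c_lim (r := v ∘ φ) hR (fun n => hvr _) hq
      obtain ⟨κ, hκ, hcore⟩ := per_core h hτ hz (hvt.comp hφ) hR hc hp hq
      have hκ0 : κ = 0 := by exact_mod_cast hκ.symm
      obtain ⟨a, b, hab, hI⟩ := quad_interval (e := 0) hne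
      refine lemG0 h hμ hF hH.u hH.d hab (z := y0) fun σ hσ => ?_
      obtain ⟨θ, hθ, rfl⟩ := hI σ hσ
      have := hH.d.cancel h (hcore θ hθ.1 (by rw [hκ0]; norm_num) F hF hH.u fun k => hvF _)
      convert this using 4
      push_cast
      ring
  · rw [not_frequently] at hfr
    obtain ⟨N, hN⟩ := eventually_atTop.1 hfr
    push Not at hN
    have hi : Tendsto (fun n => (r n 0 1).im * (r n 0 0).re) atTop (nhds 0) := by
      have h1 := (Complex.continuous_im.tendsto _).comp (tendsto_SL.1 hr).2.1
      have h2 := (Complex.continuous_re.tendsto _).comp (tendsto_SL.1 hr).1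
      simpa [Function.comp_def] using h1.mul h2
    refine lemB h hμ hF hH.u hH.d (hsub (hYF' hy0))
      (σ := fun n => (r (n + N) 0 1).im * (r (n + N) 0 0).re) (fun n => ?_)
      (hi.comp (tendsto_add_atTop_nat N)) fun n => ?_
    · obtain ⟨h1, -, -, -, h2⟩ := hprop (n + N)
      obtain ⟨c1, c2⟩ := hN (n + N) (by omega)
      exact mul_ne_zero (tri_of c2 c1 h2 h1).1 h2.ne'
    · obtain ⟨h1, h3, -, -, h2⟩ := hprop (n + N)
      obtain ⟨c1, c2⟩ := hN (n + N) (by omega)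
      obtain ⟨t, ht⟩ := (tri_of c2 c1 h2 h1).2
      apply hH.d.cancel h (δ := (r (n + N) 0 0).re) (hδ := h2)
      rw [← h.mul, ← ht, h.mul]
      exact hH.u _ h3 _

theorem abstract_thm (h : RA ax) (hμ : RM ax μ) (x : X) :
    closure {y | ∃ g, RealM g ∧ ax x g = y} = {y | ∃ g, RealM g ∧ ax x g = y} ∨
      closure {y | ∃ g, RealM g ∧ ax x g = y} = Set.univ := by
  obtain ⟨O, hO⟩ : ∃ O : Set X, O = {y | ∃ g, RealM g ∧ ax x g = y} := ⟨_, rfl⟩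
  rw [← hO]
  have memO : ∀ y, y ∈ O ↔ ∃ g, RealM g ∧ ax x g = y := fun y => by rw [hO]; rfl
  have hOH : HInv ax O := by
    intro y hy g hg
    rw [memO] at hy ⊢
    obtain ⟨k, hk, rfl⟩ := hy
    exact ⟨k * g, hk.mul hg, h.mul _ _ _⟩
  have hFH : HInv ax (closure O) := by
    intro y hy g hg
    exact map_mem_closure (f := fun x => ax x g) (h.contr g) hy fun w hw => hOH w hw g hg
  by_cases hcl : closure O = O
  · exact Or.inl hcl
  right
  have hOF : O ⊆ closure O := subset_closure
  have back : ∀ y g, RealM g → ax y g ∈ O → y ∈ O := by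
    intro y g hg hy
    have := hOH _ hy _ hg.inv
    rwa [h.mul_inv] at this
  have hne : (closure O \ O).Nonempty := by
    by_contra hcon
    rw [Set.not_nonempty_iff_eq_empty, Set.sdiff_eq_empty] at hcon
    exact hcl (hcon.antisymm hOF)
  have hH2 : HInv ax (closure O \ O) := fun y hy g hg =>
    ⟨hFH y hy.1 g hg, fun hh => hy.2 (back y g hg hh)⟩
  have app1 : ∀ y ∈ closure O \ O, App ax (closure O) y := by
    intro y hy W hW
    have hW2 := (h.opn y).image_mem_nhds hW
    rw [h.one] at hW2
    obtain ⟨_, ⟨w, hw, rfl⟩, hwO⟩ := mem_closure_iff_nhds.1 hy.1 _ hW2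
    exact ⟨w, hw, fun hr => hy.2 (back y w hr hwO), hOF hwO⟩
  by_cases hcl2 : IsClosed (closure O \ O)
  · exact core_thm h hμ isClosed_closure hFH hcl2 hH2 hne (fun y hy => hy.1) app1
  · have hex : ∃ x' ∈ closure (closure O \ O), x' ∉ closure O \ O := by
      by_contra hcon
      push Not at hcon
      exact hcl2 (isClosed_of_closure_subset hcon)
    obtain ⟨x', hx', hx'n⟩ := hex
    have hx'F : x' ∈ closure O := closure_minimal (fun y hy => hy.1) isClosed_closure hx'
    have hx'O : x' ∈ O := by
      by_contra hh
      exact hx'n ⟨hx'F, hh⟩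
    have app2 : App ax (closure O) x' := by
      intro W hW
      have hW2 := (h.opn x').image_mem_nhds hW
      rw [h.one] at hW2
      obtain ⟨_, ⟨w, hw, rfl⟩, hwO⟩ := mem_closure_iff_nhds.1 hx' _ hW2
      exact ⟨w, hw, fun hr => hwO.2 (hOH _ hx'O _ hr), hwO.1⟩
    have app3 : ∀ y ∈ O, App ax (closure O) y := by
      intro y hy W hW
      rw [memO] at hy hx'O
      obtain ⟨k, hk, rfl⟩ := hy
      obtain ⟨k', hk', rfl⟩ := hx'O
      obtain ⟨m, hm⟩ : ∃ m, m = k'⁻¹ * k := ⟨_, rfl⟩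
      have hmr : RealM m := by rw [hm]; exact hk'.inv.mul hk
      have hcont : Continuous fun g : SL2C => m⁻¹ * g * m := by fun_prop
      have hW' : (fun g : SL2C => m⁻¹ * g * m) ⁻¹' W ∈ nhds (1 : SL2C) := by
        apply hcont.continuousAt.preimage_mem_nhds
        simpa using hW
      obtain ⟨g, hgW, hgr, hgF⟩ := app2 _ hW'
      refine ⟨m⁻¹ * g * m, hgW, fun hr => hgr ?_, ?_⟩
      · have := (hmr.mul hr).mul hmr.inv
        convert this using 1
        group
      · have e : ax x k = ax (ax x k') m := by
          rw [← h.mul, hm, mul_inv_cancel_left]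
        rw [e, h.mul, h.mul, h.mul_inv]
        exact hFH _ hgF _ hmr
    refine core_thm h hμ isClosed_closure hFH isClosed_closure hFH (hne.mono fun y hy => hy.1)
      subset_rfl fun y hy => ?_
    by_cases hyO : y ∈ O
    · exact app3 y hyO
    · exact app1 y ⟨hy, hyO⟩

end core

lemma orb_Hset (Γ : Subgroup PSL2C) (x : XΓ Γ) :
    orb Γ x Hset = {y | ∃ g, RealM g ∧ axΓ Γ x g = y} := by
  apply Set.ext
  intro y
  constructor
  · rintro ⟨_, ⟨g, rfl⟩, rfl⟩
    refine ⟨_, ?_, rfl⟩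
    refine ⟨?_, ?_, ?_, ?_⟩ <;> simp
  · rintro ⟨g, hg, rfl⟩
    refine ⟨pr g, ⟨⟨!![(g 0 0).re, (g 0 1).re; (g 1 0).re, (g 1 1).re], ?_⟩, ?_⟩, rfl⟩
    · have := congrArg Complex.re (SL_det g)
      rw [Matrix.det_fin_two_of]
      simpa [hg.1, hg.2.1, hg.2.2.1, hg.2.2.2] using this
    · congr 1
      obtain ⟨h1, h2, h3, h4⟩ := hg
      apply SL_ext
      · exact Complex.ext rfl h1
      · exact Complex.ext rfl h2
      · exact Complex.ext rfl h3
      · exact Complex.ext rfl h4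

theorem final_thm
    (Γ : Subgroup PSL2C) (hdisc : DiscreteTopology Γ) (hlat : IsLattice Γ)
    (x : XΓ Γ) :
    closure (orb Γ x Hset) = orb Γ x Hset ∨ closure (orb Γ x Hset) = Set.univ := by
  letI : MeasurableSpace (XΓ Γ) := borel _
  haveI : BorelSpace (XΓ Γ) := ⟨rfl⟩
  obtain ⟨μ, h1, h2, h3⟩ := hlat
  rw [orb_Hset]
  exact abstract_thm (RA_axΓ Γ hdisc) (μ := μ) ⟨h1, h2, fun g => h3 (pr g)⟩ x


/-- If `Γ` is a lattice in `PSL(2,ℂ)`, then for every `x ∈ Γ\G` the closure of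
the orbit `xH` is either `xH` itself or all of `Γ\G`. -/
theorem closure_H_orbit_lattice
    (Γ : Subgroup PSL2C) (hdisc : DiscreteTopology Γ) (hlat : IsLattice Γ)
    (x : XΓ Γ) :
    closure (orb Γ x Hset) = orb Γ x Hset ∨ closure (orb Γ x Hset) = Set.univ := by
  exact final_thm Γ hdisc hlat x


end
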